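/- arXiv:2201.02931 — 4 statements merged into one kernel-verified Lean document; each statement's English description precedes it below -/
import Mathlib

section
/- Let D ⊂ ℂ^n be an open polydisc centered at the origin, Γ ⊂ ℂ^n∖{0} an open convex cone, and V = D×Γ. For every symbol of C∞-type f ∈ 𝔖^∞(V) there exist a polydisc D' with closure contained in D and a null-symbol of C∞-type g ∈ 𝔑^∞(D'×Γ) such that f−g is holomorphic on an infinitesimal wedge of type D'×Γ and f−g ∈ 𝔖(D'×Γ). (This is the surjectivity on stalks of the canonical morphism ι : 𝔖/𝔑 → 𝔖^∞/𝔑^∞; its injectivity is immediate from the definitions, so ι induces a bijection on stalks.) -/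
open Complex

noncomputable section

/-- `ℂ^n`. -/
abbrev Cn (n : ℕ) : Type := Fin n → ℂ

/-- The space `ℂ^n_z × ℂ^n_ζ`. -/
abbrev Pt (n : ℕ) : Type := Cn n × Cn n

/-- The Euclidean norm of `ζ ∈ ℂ^n`. -/
def eucNorm {n : ℕ} (ζ : Cn n) : ℝ := Real.sqrt (∑ i, Complex.normSq (ζ i))

/-- `V` is a cone: stable under the dilations `(z, ζ) ↦ (z, tζ)`, `t > 0`. -/
def IsCone {n : ℕ} (V : Set (Pt n)) : Prop :=
  ∀ p ∈ V, ∀ t : ℝ, 0 < t → (p.1, t • p.2) ∈ V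

/-- `K` is a relatively compact subset of `V`. -/
def RelCpt {n : ℕ} (K V : Set (Pt n)) : Prop :=
  IsCompact (closure K) ∧ closure K ⊆ V

/-- `W` is an infinitesimal wedge of type `V`. -/
def IsInfWedge {n : ℕ} (V W : Set (Pt n)) : Prop :=
  W ⊆ V ∧ ∀ K : Set (Pt n), RelCpt K V →
    ∃ δ : ℝ, 0 < δ ∧ ∀ p ∈ K, ∀ t : ℝ, δ < t → (p.1, t • p.2) ∈ W

/-- `V' ⋐cone V` : `V'` is a relatively compact cone in `V`. -/
def ConeRelCpt {n : ℕ} (V' V : Set (Pt n)) : Prop :=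
  ∃ K : Set (Pt n), RelCpt K V ∧
    V' = {p : Pt n | ∃ t : ℝ, 0 < t ∧ ∃ q ∈ K, p = (q.1, t • q.2)}

/-- Wirtinger derivative `∂/∂z_i` in the first variable. -/
def dz {n : ℕ} (i : Fin n) (f : Pt n → ℂ) : Pt n → ℂ := fun p =>
  (1 / 2 : ℂ) * (fderiv ℝ f p ((Pi.single i 1 : Cn n), 0)
    - Complex.I * fderiv ℝ f p ((Pi.single i Complex.I : Cn n), 0))

/-- Wirtinger derivative `∂/∂z̄_i` in the first variable. -/
def dzbar {n : ℕ} (i : Fin n) (f : Pt n → ℂ) : Pt n → ℂ := fun p =>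
  (1 / 2 : ℂ) * (fderiv ℝ f p ((Pi.single i 1 : Cn n), 0)
    + Complex.I * fderiv ℝ f p ((Pi.single i Complex.I : Cn n), 0))

/-- The iterated mixed derivative `∂^α_z ∂^β_z̄` in the first variable. -/
def mixedDeriv {n : ℕ} (α β : Fin n → ℕ) (f : Pt n → ℂ) : Pt n → ℂ :=
  ((List.ofFn fun i => (dz i)^[α i]) ++ (List.ofFn fun i => (dzbar i)^[β i])).foldr
    (fun d g => d g) f

/-- `f ∈ C^∞_z 𝒪_ζ (W)` : `f` is `C^∞` on `W` and holomorphic in the second variable. -/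
def CinfO {n : ℕ} (W : Set (Pt n)) (f : Pt n → ℂ) : Prop :=
  ContDiffOn ℝ (⊤ : ℕ∞) f W ∧
  ∀ z : Cn n, DifferentiableOn ℂ (fun ζ => f (z, ζ)) {ζ : Cn n | (z, ζ) ∈ W}

/-- `f` is a null-symbol of `C^∞`-type on `V`, defined on the infinitesimal wedge `W`. -/
def IsNullSymbolInf {n : ℕ} (V W : Set (Pt n)) (f : Pt n → ℂ) : Prop :=
  IsInfWedge V W ∧ CinfO W f ∧
  ∀ V' : Set (Pt n), IsOpen V' → IsCone V' → ConeRelCpt V' V →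
    ∃ W' : Set (Pt n), W' ⊆ W ∧ IsInfWedge V' W' ∧
      ∀ α β : Fin n → ℕ, ∃ h C : ℝ, 0 < h ∧ 0 < C ∧
        ∀ p ∈ W', ‖mixedDeriv α β f p‖ ≤ C * Real.exp (-h * eucNorm p.2)

/-- `f` is a symbol of `C^∞`-type on `V`, defined on the infinitesimal wedge `W`. -/
def IsSymbolInf {n : ℕ} (V W : Set (Pt n)) (f : Pt n → ℂ) : Prop :=
  IsInfWedge V W ∧ CinfO W f ∧
  (∀ V' : Set (Pt n), IsOpen V' → IsCone V' → ConeRelCpt V' V →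
    ∃ W' : Set (Pt n), W' ⊆ W ∧ IsInfWedge V' W' ∧
      ∀ α β : Fin n → ℕ, ∀ h : ℝ, 0 < h → ∃ C : ℝ, 0 < C ∧
        ∀ p ∈ W', ‖mixedDeriv α β f p‖ ≤ C * Real.exp (h * eucNorm p.2)) ∧
  ∀ i : Fin n, ∃ Wi : Set (Pt n), IsNullSymbolInf V Wi (dzbar i f)


/-- `f` is a (classical) symbol on the open cone `V`, holomorphic on the infinitesimal
wedge `W` of type `V`, with infra-exponential growth on wedges over relatively compact
subcones. -/
def IsSymbol {n : ℕ} (V W : Set (Pt n)) (f : Pt n → ℂ) : Prop :=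
  IsInfWedge V W ∧ DifferentiableOn ℂ f W ∧
  ∀ V' : Set (Pt n), IsOpen V' → IsCone V' → ConeRelCpt V' V →
    ∃ W' : Set (Pt n), W' ⊆ W ∧ IsInfWedge V' W' ∧
      ∀ h : ℝ, 0 < h → ∃ C : ℝ, 0 < C ∧
        ∀ p ∈ W', ‖f p‖ ≤ C * Real.exp (h * eucNorm p.2)

/-! ### Words of Wirtinger derivatives -/

/-- elementary Wirtinger operator -/
def opd {n : ℕ} (a : Fin n × Bool) (f : Pt n → ℂ) : Pt n → ℂ :=
  if a.2 then dzbar a.1 f else dz a.1 f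

def sgnI (b : Bool) : ℂ := if b then Complex.I else -Complex.I

theorem opd_apply {n : ℕ} (a : Fin n × Bool) (f : Pt n → ℂ) (p : Pt n) :
    opd a f p = (1 / 2 : ℂ) * (fderiv ℝ f p ((Pi.single a.1 1 : Cn n), 0)
      + sgnI a.2 * fderiv ℝ f p ((Pi.single a.1 Complex.I : Cn n), 0)) := by
  rcases a with ⟨i, b⟩
  cases b <;> simp [opd, sgnI, dz, dzbar, sub_eq_add_neg]

theorem opd_congr {n : ℕ} {U : Set (Pt n)} (hU : IsOpen U) (a : Fin n × Bool)
    {f g : Pt n → ℂ} (h : Set.EqOn f g U) : Set.EqOn (opd a f) (opd a g) U := by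
  intro p hp
  have : f =ᶠ[nhds p] g := Filter.eventuallyEq_of_mem (hU.mem_nhds hp) h
  rw [opd_apply, opd_apply, this.fderiv_eq]

theorem fderiv_smooth {n : ℕ} {U : Set (Pt n)} (hU : IsOpen U)
    {f : Pt n → ℂ} (h : ContDiffOn ℝ (⊤ : ℕ∞) f U) :
    ContDiffOn ℝ (⊤ : ℕ∞) (fderiv ℝ f) U :=
  h.fderiv_of_isOpen hU (by simp)

theorem opd_smooth {n : ℕ} {U : Set (Pt n)} (hU : IsOpen U) (a : Fin n × Bool)
    {f : Pt n → ℂ} (h : ContDiffOn ℝ (⊤ : ℕ∞) f U) : ContDiffOn ℝ (⊤ : ℕ∞) (opd a f) U := by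
  have h1 := fderiv_smooth hU h
  have e : opd a f = fun p => (1 / 2 : ℂ) * (fderiv ℝ f p ((Pi.single a.1 1 : Cn n), 0)
      + sgnI a.2 * fderiv ℝ f p ((Pi.single a.1 Complex.I : Cn n), 0)) := by
    funext p; exact opd_apply a f p
  rw [e]
  exact contDiffOn_const.mul ((h1.clm_apply contDiffOn_const).add
    (contDiffOn_const.mul (h1.clm_apply contDiffOn_const)))

theorem opd_sub {n : ℕ} {U : Set (Pt n)} (hU : IsOpen U) (a : Fin n × Bool)
    {f g : Pt n → ℂ} (hf : ContDiffOn ℝ (⊤ : ℕ∞) f U) (hg : ContDiffOn ℝ (⊤ : ℕ∞) g U) :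
    Set.EqOn (opd a (fun p => f p - g p)) (fun p => opd a f p - opd a g p) U := by
  intro p hp
  have h1 : DifferentiableAt ℝ f p :=
    (hf.contDiffAt (hU.mem_nhds hp)).differentiableAt (by simp)
  have h2 : DifferentiableAt ℝ g p :=
    (hg.contDiffAt (hU.mem_nhds hp)).differentiableAt (by simp)
  simp only [opd_apply]
  rw [fderiv_fun_sub h1 h2]
  simp only [sub_apply]
  ring

theorem fderiv_opd {n : ℕ} {U : Set (Pt n)} (hU : IsOpen U) (a : Fin n × Bool)
    {f : Pt n → ℂ} (h : ContDiffOn ℝ (⊤ : ℕ∞) f U) {p : Pt n} (hp : p ∈ U) (v : Pt n) :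
    fderiv ℝ (opd a f) p v =
      (1 / 2 : ℂ) * (fderiv ℝ (fderiv ℝ f) p v ((Pi.single a.1 1 : Cn n), 0)
      + sgnI a.2 * fderiv ℝ (fderiv ℝ f) p v ((Pi.single a.1 Complex.I : Cn n), 0)) := by
  have h1 : DifferentiableAt ℝ (fderiv ℝ f) p :=
    ((fderiv_smooth hU h).contDiffAt (hU.mem_nhds hp)).differentiableAt (by simp)
  have e : opd a f = fun p => (1 / 2 : ℂ) * (fderiv ℝ f p ((Pi.single a.1 1 : Cn n), 0)
      + sgnI a.2 * fderiv ℝ f p ((Pi.single a.1 Complex.I : Cn n), 0)) := by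
    funext p; exact opd_apply a f p
  have key : ∀ w : Pt n, HasFDerivAt (fun q => fderiv ℝ f q w)
      ((ContinuousLinearMap.apply ℝ ℂ w).comp (fderiv ℝ (fderiv ℝ f) p)) p := fun w =>
    (ContinuousLinearMap.apply ℝ ℂ w).hasFDerivAt.comp p h1.hasFDerivAt
  have k := (((key ((Pi.single a.1 1 : Cn n), 0)).add
    ((key ((Pi.single a.1 Complex.I : Cn n), 0)).const_mul (sgnI a.2))).const_mul (1 / 2 : ℂ)).fderiv
  rw [e]
  erw [k]
  simp
  ring

theorem opd_comm {n : ℕ} {U : Set (Pt n)} (hU : IsOpen U) (a b : Fin n × Bool)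
    {f : Pt n → ℂ} (h : ContDiffOn ℝ (⊤ : ℕ∞) f U) :
    Set.EqOn (opd a (opd b f)) (opd b (opd a f)) U := by
  intro p hp
  have hs : IsSymmSndFDerivAt ℝ f p :=
    (h.contDiffAt (hU.mem_nhds hp)).isSymmSndFDerivAt (by
      simp only [minSmoothness_of_isRCLikeNormedField]
      exact WithTop.coe_le_coe.2 (le_top : (2 : ℕ∞) ≤ ⊤))
  rw [opd_apply, opd_apply b, fderiv_opd hU b h hp, fderiv_opd hU b h hp,
    fderiv_opd hU a h hp, fderiv_opd hU a h hp]
  rw [hs.eq (Pi.single a.1 1, 0) (Pi.single b.1 1, 0),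
    hs.eq (Pi.single a.1 1, 0) (Pi.single b.1 Complex.I, 0),
    hs.eq (Pi.single a.1 Complex.I, 0) (Pi.single b.1 1, 0),
    hs.eq (Pi.single a.1 Complex.I, 0) (Pi.single b.1 Complex.I, 0)]
  ring

def Dw {n : ℕ} (w : List (Fin n × Bool)) (f : Pt n → ℂ) : Pt n → ℂ := w.foldr opd f

theorem Dw_cons {n : ℕ} (a : Fin n × Bool) (w : List (Fin n × Bool)) (f : Pt n → ℂ) :
    Dw (a :: w) f = opd a (Dw w f) := rfl

theorem Dw_append {n : ℕ} (w w' : List (Fin n × Bool)) (f : Pt n → ℂ) :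
    Dw (w ++ w') f = Dw w (Dw w' f) := by
  simp [Dw, List.foldr_append]

theorem Dw_smooth {n : ℕ} {U : Set (Pt n)} (hU : IsOpen U) (w : List (Fin n × Bool))
    {f : Pt n → ℂ} (h : ContDiffOn ℝ (⊤ : ℕ∞) f U) : ContDiffOn ℝ (⊤ : ℕ∞) (Dw w f) U := by
  induction w with
  | nil => exact h
  | cons a w ih => exact opd_smooth hU a ih

theorem Dw_congr {n : ℕ} {U : Set (Pt n)} (hU : IsOpen U) (w : List (Fin n × Bool))
    {f g : Pt n → ℂ} (h : Set.EqOn f g U) : Set.EqOn (Dw w f) (Dw w g) U := by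
  induction w with
  | nil => exact h
  | cons a w ih => exact opd_congr hU a ih

theorem Dw_sub {n : ℕ} {U : Set (Pt n)} (hU : IsOpen U) (w : List (Fin n × Bool))
    {f g : Pt n → ℂ} (hf : ContDiffOn ℝ (⊤ : ℕ∞) f U) (hg : ContDiffOn ℝ (⊤ : ℕ∞) g U) :
    Set.EqOn (Dw w (fun p => f p - g p)) (fun p => Dw w f p - Dw w g p) U := by
  induction w with
  | nil => intro p _; rfl
  | cons a w ih =>
    intro p hp
    rw [Dw_cons, opd_congr hU a ih hp, opd_sub hU a (Dw_smooth hU w hf) (Dw_smooth hU w hg) hp]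
    rfl

theorem Dw_perm {n : ℕ} {U : Set (Pt n)} (hU : IsOpen U) {w w' : List (Fin n × Bool)}
    (hw : w.Perm w') {f : Pt n → ℂ} (h : ContDiffOn ℝ (⊤ : ℕ∞) f U) :
    Set.EqOn (Dw w f) (Dw w' f) U := by
  induction hw with
  | nil => intro p _; rfl
  | cons a _ ih => exact opd_congr hU a ih
  | swap a b l => exact opd_comm hU b a (Dw_smooth hU l h)
  | trans _ _ h1 h2 => exact h1.trans h2

def nrm {n : ℕ} (α β : Fin n → ℕ) : List (Fin n × Bool) :=
  (List.ofFn fun i => List.replicate (α i) (i, false)).flatten ++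
  (List.ofFn fun i => List.replicate (β i) (i, true)).flatten

theorem foldr_rep {n : ℕ} (f : Pt n → ℂ) (b : Bool) (α : Fin n → ℕ) (l : List (Fin n)) :
    (l.map fun i => (fun g => opd (i, b) g)^[α i]).foldr (fun d g => d g) f =
    Dw (l.map fun i => List.replicate (α i) (i, b)).flatten f := by
  induction l with
  | nil => rfl
  | cons i l ih =>
    simp only [List.map_cons, List.foldr_cons, List.flatten_cons, Dw_append, ih]
    generalize Dw _ f = G
    induction α i with
    | zero => rfl
    | succ k ihk => rw [Function.iterate_succ_apply', ihk, List.replicate_succ, Dw_cons]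

theorem mixed_eq {n : ℕ} (α β : Fin n → ℕ) (f : Pt n → ℂ) :
    mixedDeriv α β f = Dw (nrm α β) f := by
  have h1 : ∀ i : Fin n, dz i = fun g => opd (i, false) g := fun i => by
    funext g; simp [opd]
  have h2 : ∀ i : Fin n, dzbar i = fun g => opd (i, true) g := fun i => by
    funext g; simp [opd]
  unfold mixedDeriv nrm
  rw [List.foldr_append, Dw_append]
  simp only [h1, h2, List.ofFn_eq_map]
  rw [foldr_rep, foldr_rep]

theorem exists_nrm {n : ℕ} (w : List (Fin n × Bool)) :
    ∃ α β : Fin n → ℕ, w.Perm (nrm α β) := by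
  refine ⟨fun i => w.count (i, false), fun i => w.count (i, true), ?_⟩
  rw [List.perm_iff_count]
  rintro ⟨i, b⟩
  have : ∀ (α : Fin n → ℕ) (b' : Bool),
      List.count (i, b) (List.ofFn fun i => List.replicate (α i) (i, b')).flatten
        = if b = b' then α i else 0 := by
    intro α b'
    rw [List.count_flatten, List.map_ofFn, List.sum_ofFn]
    simp only [Function.comp_def, List.count_replicate]
    rw [Finset.sum_eq_single i]
    · cases b <;> cases b' <;> simp
    · intro j _ hj; simp [hj]
    · simp
  rw [nrm, List.count_append, this, this]
  cases b <;> simp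

/-! ### Parametric integrals -/

open MeasureTheory in
theorem pi_hasFDerivAt {E H G : Type} [NormedAddCommGroup E] [NormedSpace ℝ E] [ProperSpace E]
    [NormedAddCommGroup H] [NormedSpace ℝ H] [MeasurableSpace H] [BorelSpace H]
    [SecondCountableTopology H]
    [NormedAddCommGroup G] [NormedSpace ℝ G]
    (μ : Measure H) [IsFiniteMeasureOnCompacts μ] {K : Set H} (hK : IsCompact K)
    {A : Set E} (hA : IsOpen A) {F : E × H → G}
    (hF : ContDiffOn ℝ 1 F (A ×ˢ Set.univ)) {x₀ : E} (hx : x₀ ∈ A) :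
    IntegrableOn (fun θ => (fderiv ℝ F (x₀, θ)).comp (ContinuousLinearMap.inl ℝ E H)) K μ ∧
    HasFDerivAt (fun x => ∫ θ in K, F (x, θ) ∂μ)
      (∫ θ in K, (fderiv ℝ F (x₀, θ)).comp (ContinuousLinearMap.inl ℝ E H) ∂μ) x₀ := by
  have hO : IsOpen (A ×ˢ (Set.univ : Set H)) := hA.prod isOpen_univ
  have hd : ∀ x ∈ A, ∀ θ, DifferentiableAt ℝ F (x, θ) := fun x hx θ =>
    (hF.contDiffAt (hO.mem_nhds ⟨hx, trivial⟩)).differentiableAt (by simp)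
  have hc : ContinuousOn (fun p => (fderiv ℝ F p).comp (ContinuousLinearMap.inl ℝ E H))
      (A ×ˢ Set.univ) :=
    (hF.continuousOn_fderiv_of_isOpen hO le_rfl).clm_comp continuousOn_const
  have hcx : ∀ x ∈ A, Continuous (fun θ => F (x, θ)) := fun x hx => by
    rw [← continuousOn_univ]
    exact hF.continuousOn.comp (by fun_prop) (fun θ _ => ⟨hx, trivial⟩)
  have hcx' : Continuous (fun θ => (fderiv ℝ F (x₀, θ)).comp (ContinuousLinearMap.inl ℝ E H)) := by
    rw [← continuousOn_univ]
    exact hc.comp (by fun_prop : ContinuousOn (fun θ => (x₀, θ)) Set.univ)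
      (fun θ _ => ⟨hx, trivial⟩)
  refine ⟨hcx'.continuousOn.integrableOn_compact hK, ?_⟩
  obtain ⟨ε, hε, hball⟩ := Metric.nhds_basis_closedBall.mem_iff.1 (hA.mem_nhds hx)
  obtain ⟨C, hC⟩ := ((isCompact_closedBall x₀ ε).prod hK).exists_bound_of_continuousOn
    (hc.mono (Set.prod_mono hball (Set.subset_univ _)))
  refine hasFDerivAt_integral_of_dominated_of_fderiv_le (bound := fun _ => C)
    (F' := fun x θ => (fderiv ℝ F (x, θ)).comp (ContinuousLinearMap.inl ℝ E H))
    (Metric.ball_mem_nhds x₀ hε) ?_ ?_ ?_ ?_ ?_ ?_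
  · filter_upwards [hA.mem_nhds hx] with x hx
    exact (hcx x hx).continuousOn.aestronglyMeasurable_of_isCompact hK hK.measurableSet
  · exact (hcx x₀ hx).continuousOn.integrableOn_compact hK
  · exact hcx'.continuousOn.aestronglyMeasurable_of_isCompact hK hK.measurableSet
  · filter_upwards [ae_restrict_mem hK.measurableSet] with θ hθ x hx
    exact hC (x, θ) ⟨Metric.ball_subset_closedBall hx, hθ⟩
  · have : IsFiniteMeasure (μ.restrict K) := ⟨by simpa using hK.measure_lt_top⟩
    exact integrable_const C
  · refine Filter.Eventually.of_forall fun θ x hx => ?_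
    have h1 := (hd x (hball (Metric.ball_subset_closedBall hx)) θ).hasFDerivAt
    exact h1.comp x (hasFDerivAt_prodMk_left x θ)

open MeasureTheory in
theorem pi_contDiffOn_nat {E H : Type} [NormedAddCommGroup E] [NormedSpace ℝ E] [ProperSpace E]
    [NormedAddCommGroup H] [NormedSpace ℝ H] [MeasurableSpace H] [BorelSpace H]
    [SecondCountableTopology H]
    (μ : Measure H) [IsFiniteMeasureOnCompacts μ] {K : Set H} (hK : IsCompact K)
    {A : Set E} (hA : IsOpen A) (m : ℕ) : ∀ {G : Type} [NormedAddCommGroup G] [NormedSpace ℝ G]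
    {F : E × H → G}
    (_ : ContDiffOn ℝ (⊤ : ℕ∞) F (A ×ˢ Set.univ)),
    ContDiffOn ℝ m (fun x => ∫ θ in K, F (x, θ) ∂μ) A := by
  induction m with
  | zero =>
    intro G _ _ F hF
    refine contDiffOn_zero.2 fun x hx => ?_
    exact (pi_hasFDerivAt μ hK hA (hF.of_le (by exact_mod_cast le_top)) hx).2.continuousAt.continuousWithinAt
  | succ m ih =>
    intro G _ _ F hF
    have hO : IsOpen (A ×ˢ (Set.univ : Set H)) := hA.prod isOpen_univ
    have hF1 : ContDiffOn ℝ 1 F (A ×ˢ Set.univ) := hF.of_le (by exact_mod_cast le_top)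
    push_cast
    rw [contDiffOn_succ_iff_fderiv_of_isOpen hA]
    refine ⟨fun x hx => (pi_hasFDerivAt μ hK hA hF1 hx).2.differentiableAt.differentiableWithinAt,
      by simp, ?_⟩
    have hF' : ContDiffOn ℝ (⊤ : ℕ∞)
        (fun p => (fderiv ℝ F p).comp (ContinuousLinearMap.inl ℝ E H)) (A ×ˢ Set.univ) :=
      (hF.fderiv_of_isOpen hO (by simp)).clm_comp contDiffOn_const
    refine (ih hF').congr fun x hx => ?_
    exact (pi_hasFDerivAt μ hK hA hF1 hx).2.fderiv

open MeasureTheory in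
theorem pi_contDiffOn {E H G : Type} [NormedAddCommGroup E] [NormedSpace ℝ E] [ProperSpace E]
    [NormedAddCommGroup H] [NormedSpace ℝ H] [MeasurableSpace H] [BorelSpace H]
    [SecondCountableTopology H]
    [NormedAddCommGroup G] [NormedSpace ℝ G]
    (μ : Measure H) [IsFiniteMeasureOnCompacts μ] {K : Set H} (hK : IsCompact K)
    {A : Set E} (hA : IsOpen A) {F : E × H → G}
    (hF : ContDiffOn ℝ (⊤ : ℕ∞) F (A ×ˢ Set.univ)) :
    ContDiffOn ℝ (⊤ : ℕ∞) (fun x => ∫ θ in K, F (x, θ) ∂μ) A :=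
  contDiffOn_infty.2 fun m => pi_contDiffOn_nat μ hK hA m hF

/-- real-differentiable with `I`-linear derivative is complex differentiable -/
theorem complexDiff_of_real {E : Type} [NormedAddCommGroup E] [NormedSpace ℂ E]
    {u : E → ℂ} {L : E →L[ℝ] ℂ} {x : E} (h : HasFDerivAt u L x)
    (hI : ∀ v, L (Complex.I • v) = Complex.I * L v) : DifferentiableAt ℂ u x := by
  have hsm : ∀ (c : ℂ) (v : E), L (c • v) = c * L v := by
    intro c v
    have : c • v = c.re • v + c.im • (Complex.I • v) := by
      conv_lhs => rw [← Complex.re_add_im c]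
      rw [add_smul, mul_smul]
      simp
    rw [this, map_add, map_smul, map_smul, hI]
    have h2 : c * L v = ((c.re : ℂ) + c.im * Complex.I) * L v := by rw [Complex.re_add_im]
    rw [h2, Complex.real_smul, Complex.real_smul]
    ring
  let L0 : E →ₗ[ℂ] ℂ :=
    { toFun := L
      map_add' := map_add L
      map_smul' := fun c v => by simpa using hsm c v }
  let L' : E →L[ℂ] ℂ := ⟨L0, L.cont⟩
  have : HasFDerivAt (𝕜 := ℂ) u L' x := by
    refine hasFDerivAt_iff_isLittleO.2 ?_
    exact h.isLittleO
  exact this.differentiableAt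

/-! ### Cauchy integral on the torus -/

def tor {n : ℕ} (R : Fin n → ℝ) (θ : Fin n → ℝ) : Cn n :=
  fun i => (R i : ℂ) * Complex.exp (2 * Real.pi * Complex.I * (θ i : ℂ))

def ker {n : ℕ} (R : Fin n → ℝ) (z : Cn n) (θ : Fin n → ℝ) : ℂ :=
  ∏ i, tor R θ i / (tor R θ i - z i)

def cau {n : ℕ} (R : Fin n → ℝ) (f : Pt n → ℂ) (p : Pt n) : ℂ :=
  ∫ θ in Set.Icc (0 : Fin n → ℝ) 1, f (tor R θ, p.2) * ker R p.1 θ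

def OPol {n : ℕ} (R : Fin n → ℝ) : Set (Cn n) := {z | ∀ i, ‖z i‖ < R i}
def CPol {n : ℕ} (R : Fin n → ℝ) : Set (Cn n) := {z | ∀ i, ‖z i‖ ≤ R i}

theorem OPol_open {n : ℕ} (R : Fin n → ℝ) : IsOpen (OPol R) := by
  simp only [OPol, Set.ofPred_forall]
  exact isOpen_iInter_of_finite fun i => isOpen_lt (by fun_prop) continuous_const

theorem CPol_compact {n : ℕ} (R : Fin n → ℝ) : IsCompact (CPol R) := by
  have : CPol R = Set.univ.pi fun i => Metric.closedBall (0 : ℂ) (R i) := by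
    ext z; simp [CPol]
  rw [this]
  exact isCompact_univ_pi fun i => isCompact_closedBall _ _

theorem tor_norm {n : ℕ} {R : Fin n → ℝ} (hR : ∀ i, 0 < R i) (θ : Fin n → ℝ) (i : Fin n) :
    ‖tor R θ i‖ = R i := by
  have : (2 * Real.pi * Complex.I * (θ i : ℂ)) = ((2 * Real.pi * θ i : ℝ) : ℂ) * Complex.I := by
    push_cast; ring
  rw [tor, norm_mul, this, Complex.norm_exp_ofReal_mul_I, Complex.norm_real, Real.norm_eq_abs,
    abs_of_pos (hR i), mul_one]

theorem tor_smooth {n : ℕ} (R : Fin n → ℝ) : ContDiff ℝ (⊤ : ℕ∞) (tor R) := by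
  rw [contDiff_pi]
  intro i
  unfold tor
  refine contDiff_const.mul (ContDiff.cexp (contDiff_const.mul ?_))
  exact Complex.ofRealCLM.contDiff.comp (contDiff_apply ℝ ℝ i)

theorem tor_sub_ne {n : ℕ} {R : Fin n → ℝ} (hR : ∀ i, 0 < R i) {z : Cn n} (hz : z ∈ OPol R)
    (θ : Fin n → ℝ) (i : Fin n) : tor R θ i - z i ≠ 0 := by
  intro h
  have := hz i
  rw [sub_eq_zero] at h
  rw [← h, tor_norm hR] at this
  exact lt_irrefl _ this

/-- kernel factor bound -/
theorem fac_bound {n : ℕ} {R : Fin n → ℝ} (hR : ∀ i, 0 < R i) {τ : ℝ} (hτ : τ < 1)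
    {z : Cn n} (hz : ∀ i, ‖z i‖ ≤ τ * R i) (θ : Fin n → ℝ) (i : Fin n) :
    ‖tor R θ i / (tor R θ i - z i)‖ ≤ 1 / (1 - τ) := by
  rw [norm_div, tor_norm hR]
  have h1 : R i - τ * R i ≤ ‖tor R θ i - z i‖ := by
    have := norm_sub_norm_le (tor R θ i) (z i)
    rw [tor_norm hR] at this
    linarith [hz i]
  have h2 : 0 < R i - τ * R i := by nlinarith [hR i]
  rw [div_le_div_iff₀ (by linarith) (by linarith)]
  linarith

theorem vol_box {n : ℕ} : MeasureTheory.volume.real (Set.Icc (0 : Fin n → ℝ) 1) = 1 := by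
  simp [MeasureTheory.Measure.real, Real.volume_Icc_pi]

theorem int_box_bound {n : ℕ} {F : (Fin n → ℝ) → ℂ} {M : ℝ} (h : ∀ θ, ‖F θ‖ ≤ M) :
    ‖∫ θ in Set.Icc (0 : Fin n → ℝ) 1, F θ‖ ≤ M := by
  have := MeasureTheory.norm_setIntegral_le_of_norm_le_const (μ := MeasureTheory.volume)
    (s := Set.Icc (0 : Fin n → ℝ) 1) (f := F) (C := M)
    (isCompact_Icc.measure_lt_top) (fun θ _ => h θ)
  rwa [vol_box, mul_one] at this

theorem cau_bound {n : ℕ} {R : Fin n → ℝ} (hR : ∀ i, 0 < R i) {τ : ℝ} (hτ : τ < 1)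
    {f : Pt n → ℂ} {p : Pt n} (hz : ∀ i, ‖p.1 i‖ ≤ τ * R i) {M : ℝ}
    (hM : ∀ w ∈ CPol R, ‖f (w, p.2)‖ ≤ M) : ‖cau R f p‖ ≤ M * (1 / (1 - τ)) ^ n := by
  refine int_box_bound fun θ => ?_
  rw [norm_mul]
  have h1 := hM (tor R θ) (fun i => (tor_norm hR θ i).le)
  have h2 : ‖ker R p.1 θ‖ ≤ (1 / (1 - τ)) ^ n := by
    rw [ker, norm_prod]
    calc _ ≤ ∏ i : Fin n, (1 / (1 - τ)) :=
          Finset.prod_le_prod (fun i _ => norm_nonneg _) (fun i _ => fac_bound hR hτ hz θ i)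
      _ = _ := by simp
  exact mul_le_mul h1 h2 (norm_nonneg _) ((norm_nonneg _).trans h1)

theorem cau_integrand_smooth {n : ℕ} {R : Fin n → ℝ} (hR : ∀ i, 0 < R i)
    {f : Pt n → ℂ} {X : Set (Pt n)} {O : Set (Cn n)}
    (hf : ContDiffOn ℝ (⊤ : ℕ∞) f X) (hX : ∀ w ∈ CPol R, ∀ ζ ∈ O, (w, ζ) ∈ X) :
    ContDiffOn ℝ (⊤ : ℕ∞) (fun q : Pt n × (Fin n → ℝ) => f (tor R q.2, q.1.2) * ker R q.1.1 q.2)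
      ((OPol R ×ˢ O) ×ˢ Set.univ) := by
  have ht : ContDiff ℝ (⊤ : ℕ∞) (fun q : Pt n × (Fin n → ℝ) => tor R q.2) :=
    (tor_smooth R).comp contDiff_snd
  refine ContDiffOn.mul ?_ ?_
  · refine hf.comp (ht.prodMk (contDiff_snd.comp contDiff_fst)).contDiffOn ?_
    intro q hq
    exact hX _ (fun i => (tor_norm hR _ i).le) _ hq.1.2
  · unfold ker
    refine contDiffOn_prod fun i _ => ?_
    have hti : ContDiff ℝ (⊤ : ℕ∞) (fun q : Pt n × (Fin n → ℝ) => tor R q.2 i) :=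
      (contDiff_apply ℝ ℂ i).comp ht
    have hzi : ContDiff ℝ (⊤ : ℕ∞) (fun q : Pt n × (Fin n → ℝ) => q.1.1 i) :=
      (contDiff_apply ℝ ℂ i).comp (contDiff_fst.comp contDiff_fst)
    simp only [div_eq_mul_inv]
    refine hti.contDiffOn.mul (ContDiffOn.inv (hti.sub hzi).contDiffOn ?_)
    intro q hq
    exact tor_sub_ne hR hq.1.1 _ i

theorem cau_smooth {n : ℕ} {R : Fin n → ℝ} (hR : ∀ i, 0 < R i)
    {f : Pt n → ℂ} {X : Set (Pt n)} {O : Set (Cn n)} (hO : IsOpen O)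
    (hf : ContDiffOn ℝ (⊤ : ℕ∞) f X) (hX : ∀ w ∈ CPol R, ∀ ζ ∈ O, (w, ζ) ∈ X) :
    ContDiffOn ℝ (⊤ : ℕ∞) (cau R f) (OPol R ×ˢ O) :=
  pi_contDiffOn MeasureTheory.volume isCompact_Icc ((OPol_open R).prod hO)
    (cau_integrand_smooth hR hf hX)

theorem cau_holo {n : ℕ} {R : Fin n → ℝ} (hR : ∀ i, 0 < R i)
    {f : Pt n → ℂ} {X : Set (Pt n)} {O : Set (Cn n)} (hO : IsOpen O)
    (hf : ContDiffOn ℝ (⊤ : ℕ∞) f X) (hX : ∀ w ∈ CPol R, ∀ ζ ∈ O, (w, ζ) ∈ X)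
    (hh : ∀ w ∈ CPol R, ∀ ζ ∈ O, DifferentiableAt ℂ (fun ζ => f (w, ζ)) ζ)
    {p : Pt n} (hp : p ∈ OPol R ×ˢ O) : DifferentiableAt ℂ (cau R f) p := by
  have hs := cau_integrand_smooth hR hf hX
  have hA : IsOpen (OPol R ×ˢ O) := (OPol_open R).prod hO
  obtain ⟨hi, hd⟩ := pi_hasFDerivAt MeasureTheory.volume
    (isCompact_Icc : IsCompact (Set.Icc (0 : Fin n → ℝ) 1)) hA
    (hs.of_le (by exact_mod_cast le_top)) hp
  refine complexDiff_of_real hd ?_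
  intro v
  rw [ContinuousLinearMap.integral_apply hi, ContinuousLinearMap.integral_apply hi,
    ← MeasureTheory.integral_const_mul]
  congr 1
  funext θ
  have hF : DifferentiableAt ℝ (fun q : Pt n × (Fin n → ℝ) => f (tor R q.2, q.1.2) * ker R q.1.1 q.2)
      (p, θ) := (hs.contDiffAt ((hA.prod isOpen_univ).mem_nhds ⟨hp, trivial⟩)).differentiableAt
        (by simp)
  have h1 := HasFDerivAt.comp (f := fun e : Pt n => (e, θ)) p hF.hasFDerivAt
    (hasFDerivAt_prodMk_left (𝕜 := ℝ) p θ)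
  have hc : DifferentiableAt ℂ (fun q : Pt n => f (tor R θ, q.2) * ker R q.1 θ) p := by
    refine DifferentiableAt.mul ?_ ?_
    · exact (hh (tor R θ) (fun i => (tor_norm hR _ i).le) p.2 hp.2).comp p differentiableAt_snd
    · unfold ker
      have hi : ∀ i ∈ (Finset.univ : Finset (Fin n)), DifferentiableAt ℂ
          (fun q : Pt n => tor R θ i / (tor R θ i - q.1 i)) p := by
        intro i _
        simp only [div_eq_mul_inv]
        exact DifferentiableAt.mul (by fun_prop)
          (DifferentiableAt.inv (by fun_prop) (tor_sub_ne hR hp.1 _ i))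
      exact (HasFDerivAt.finsetProd (fun i h => (hi i h).hasFDerivAt)).differentiableAt
  have h2 := hc.hasFDerivAt.restrictScalars ℝ
  have h3 := h1.unique h2
  rw [h3]
  simp

/-! ### The Pompeiu estimate -/

open MeasureTheory in
theorem div_zero_int {n : ℕ} (F : Fin n → (Fin n → ℝ) → ℂ) (hF : ∀ k, ContDiff ℝ 1 (F k))
    (hper : ∀ k θ, F k (Function.update θ k 1) = F k (Function.update θ k 0)) :
    ∫ θ in Set.Icc (0 : Fin n → ℝ) 1, ∑ k, fderiv ℝ (F k) θ (Pi.single k 1) = 0 := by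
  cases n with
  | zero => simp
  | succ m =>
    have := integral_divergence_of_hasFDerivAt_off_countable' (0 : Fin (m + 1) → ℝ) 1
      zero_le_one F (fun k => fderiv ℝ (F k)) ∅ Set.countable_empty
      (fun i => (hF i).continuous.continuousOn)
      (fun x _ i => ((hF i).differentiable (by simp) x).hasFDerivAt)
      (Continuous.integrableOn_Icc (by
        refine continuous_finsetSum _ fun k _ => ?_
        exact ((hF k).continuous_fderiv (by simp)).clm_apply continuous_const))
    rw [this]
    refine Finset.sum_eq_zero fun k _ => ?_
    rw [sub_eq_zero]
    congr 1
    funext x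
    have := hper k (k.insertNth (0 : ℝ) x)
    simpa using this

theorem tor_line {n : ℕ} (R : Fin n → ℝ) (θ : Fin n → ℝ) (k : Fin n) :
    HasDerivAt (fun t : ℝ => tor R (θ + t • Pi.single k 1))
      (Pi.single k (2 * Real.pi * Complex.I * tor R θ k) : Cn n) 0 := by
  rw [hasDerivAt_pi]
  intro i
  by_cases h : i = k
  · subst h
    simp only [tor, Pi.add_apply, Pi.smul_apply, Pi.single_eq_same, smul_eq_mul, mul_one]
    have h1 : HasDerivAt (fun t : ℝ => ((θ i + t : ℝ) : ℂ)) 1 0 := by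
      simpa using ((hasDerivAt_id (0 : ℝ)).const_add (θ i)).ofReal_comp
    have h2 := ((h1.const_mul (2 * Real.pi * Complex.I)).cexp).const_mul (R i : ℂ)
    refine h2.congr_deriv ?_
    simp only [add_zero]
    ring
  · simp only [tor, Pi.add_apply, Pi.smul_apply, Pi.single_eq_of_ne h, smul_zero, add_zero]
    exact hasDerivAt_const _ _

theorem tor_update {n : ℕ} (R : Fin n → ℝ) (θ : Fin n → ℝ) (k : Fin n) :
    tor R (Function.update θ k 1) = tor R (Function.update θ k 0) := by
  funext i
  by_cases h : i = k
  · subst h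
    simp [tor, Complex.exp_two_pi_mul_I]
  · simp [tor, h]

/-- Wirtinger coefficients of a real-linear form -/
def wz {n : ℕ} (L : Cn n →L[ℝ] ℂ) (k : Fin n) : ℂ :=
  (1 / 2 : ℂ) * (L (Pi.single k 1) - Complex.I * L (Pi.single k Complex.I))
def wzb {n : ℕ} (L : Cn n →L[ℝ] ℂ) (k : Fin n) : ℂ :=
  (1 / 2 : ℂ) * (L (Pi.single k 1) + Complex.I * L (Pi.single k Complex.I))

theorem wirt_single {n : ℕ} (L : Cn n →L[ℝ] ℂ) (k : Fin n) (c : ℂ) :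
    L (Pi.single k c) = wz L k * c + wzb L k * (starRingEnd ℂ) c := by
  have h : (Pi.single k c : Cn n) = c.re • (Pi.single k 1 : Cn n) +
      c.im • (Pi.single k Complex.I : Cn n) := by
    rw [← Pi.single_smul, ← Pi.single_smul, ← Pi.single_add]
    congr 1
    simp
  rw [h, map_add, map_smul, map_smul]
  have h2 : (starRingEnd ℂ) c = c.re - c.im * Complex.I := by
    apply Complex.ext <;> simp
  rw [h2]
  conv_rhs => rw [← Complex.re_add_im c]
  simp only [wz, wzb, Complex.real_smul, Complex.add_re, Complex.ofReal_re, Complex.mul_re,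
    Complex.I_re, Complex.add_im, Complex.ofReal_im, Complex.mul_im, Complex.I_im, mul_zero,
    mul_one, sub_zero, add_zero, zero_add]
  linear_combination ((c.im : ℂ) * L (Pi.single k Complex.I)) * Complex.I_sq

theorem wirt_expand {n : ℕ} (L : Cn n →L[ℝ] ℂ) (v : Cn n) :
    L v = ∑ k, (wz L k * v k + wzb L k * (starRingEnd ℂ) (v k)) := by
  conv_lhs => rw [← Finset.univ_sum_single v]
  rw [map_sum]
  exact Finset.sum_congr rfl fun k _ => wirt_single L k (v k)

theorem ker_int_one {n : ℕ} {R : Fin n → ℝ} {z : Cn n} (hz : z ∈ OPol R) :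
    ∫ θ in Set.Icc (0 : Fin n → ℝ) 1, ker R z θ = 1 := by
  have hbox : Set.Icc (0 : Fin n → ℝ) 1 = Set.univ.pi fun _ => Set.Icc (0 : ℝ) 1 := by
    rw [← Set.pi_univ_Icc]; rfl
  rw [hbox, MeasureTheory.volume_pi, MeasureTheory.Measure.restrict_pi_pi]
  have := MeasureTheory.integral_fintype_prod_eq_prod (𝕜 := ℂ)
    (μ := fun _ : Fin n => (MeasureTheory.volume : MeasureTheory.Measure ℝ).restrict (Set.Icc 0 1))
    (fun i (t : ℝ) => ((R i : ℂ) * Complex.exp (2 * Real.pi * Complex.I * (t : ℂ))) /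
      ((R i : ℂ) * Complex.exp (2 * Real.pi * Complex.I * (t : ℂ)) - z i))
  refine this.trans ?_
  refine Finset.prod_eq_one fun i _ => ?_
  have hc : (∮ w in C((0 : ℂ), R i), (w - z i)⁻¹) = 2 * Real.pi * Complex.I :=
    circleIntegral.integral_sub_inv_of_mem_ball (by simpa using hz i)
  rw [circleIntegral] at hc
  rw [MeasureTheory.integral_Icc_eq_integral_Ioc, ← intervalIntegral.integral_of_le zero_le_one]
  have hsub := intervalIntegral.integral_comp_mul_left (a := 0) (b := 1)
    (fun θ : ℝ => deriv (circleMap 0 (R i)) θ • (circleMap 0 (R i) θ - z i)⁻¹)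
    (c := 2 * Real.pi) (by positivity)
  rw [mul_zero, mul_one, hc] at hsub
  have e : ∀ x : ℝ, deriv (circleMap 0 (R i)) (2 * Real.pi * x) •
        (circleMap 0 (R i) (2 * Real.pi * x) - z i)⁻¹ =
      Complex.I * (((R i : ℂ) * Complex.exp (2 * Real.pi * Complex.I * (x : ℂ))) /
      ((R i : ℂ) * Complex.exp (2 * Real.pi * Complex.I * (x : ℂ)) - z i)) := by
    intro x
    have : ((2 * Real.pi * x : ℝ) : ℂ) * Complex.I = 2 * Real.pi * Complex.I * (x : ℂ) := by
      push_cast; ring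
    rw [deriv_circleMap]
    simp only [circleMap, this, zero_add, smul_eq_mul]
    ring
  simp only [e] at hsub
  rw [intervalIntegral.integral_const_mul] at hsub
  have hpi : (Real.pi : ℂ) ≠ 0 := by exact_mod_cast Real.pi_ne_zero
  have hs2 : (2 * Real.pi)⁻¹ • (2 * Real.pi * Complex.I) = Complex.I := by
    rw [Complex.real_smul]; push_cast; field_simp
  rw [hs2] at hsub
  have := mul_left_cancel₀ Complex.I_ne_zero (hsub.trans (mul_one _).symm)
  exact this

/-- product of the kernel factors other than the `k`-th -/
def kerE {n : ℕ} (R : Fin n → ℝ) (z : Cn n) (k : Fin n) (θ : Fin n → ℝ) : ℂ :=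
  ∏ i ∈ Finset.univ.erase k, tor R θ i / (tor R θ i - z i)

theorem ker_eq {n : ℕ} (R : Fin n → ℝ) (z : Cn n) (k : Fin n) (θ : Fin n → ℝ) :
    ker R z θ = tor R θ k / (tor R θ k - z k) * kerE R z k θ := by
  rw [ker, kerE, Finset.mul_prod_erase _ (fun i => tor R θ i / (tor R θ i - z i))
    (Finset.mem_univ k)]

theorem fac_smooth {n : ℕ} {R : Fin n → ℝ} (hR : ∀ i, 0 < R i) {z : Cn n} (hz : z ∈ OPol R)
    (i : Fin n) : ContDiff ℝ (⊤ : ℕ∞) (fun θ => tor R θ i / (tor R θ i - z i)) := by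
  have hti : ContDiff ℝ (⊤ : ℕ∞) (fun θ => tor R θ i) :=
    (contDiff_apply ℝ ℂ i).comp (tor_smooth R)
  simp only [div_eq_mul_inv]
  exact hti.mul (ContDiff.inv (hti.sub contDiff_const) fun θ => tor_sub_ne hR hz θ i)

theorem ker_smooth {n : ℕ} {R : Fin n → ℝ} (hR : ∀ i, 0 < R i) {z : Cn n} (hz : z ∈ OPol R) :
    ContDiff ℝ (⊤ : ℕ∞) (ker R z) :=
  contDiff_prod fun i _ => fac_smooth hR hz i

theorem kerE_smooth {n : ℕ} {R : Fin n → ℝ} (hR : ∀ i, 0 < R i) {z : Cn n} (hz : z ∈ OPol R)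
    (k : Fin n) : ContDiff ℝ (⊤ : ℕ∞) (kerE R z k) :=
  contDiff_prod fun i _ => fac_smooth hR hz i

theorem kerE_line {n : ℕ} (R : Fin n → ℝ) (z : Cn n) (k : Fin n) (θ : Fin n → ℝ) (t : ℝ) :
    kerE R z k (θ + t • Pi.single k 1) = kerE R z k θ := by
  unfold kerE
  refine Finset.prod_congr rfl fun i hi => ?_
  have : i ≠ k := Finset.ne_of_mem_erase hi
  simp [tor, this]

theorem kerE_bound {n : ℕ} {R : Fin n → ℝ} (hR : ∀ i, 0 < R i) {τ : ℝ} (hτ : τ < 1)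
    {z : Cn n} (hz : ∀ i, ‖z i‖ ≤ τ * R i) (k : Fin n) (θ : Fin n → ℝ) :
    ‖kerE R z k θ‖ ≤ (1 / (1 - τ)) ^ (n - 1) := by
  rw [kerE, norm_prod]
  calc _ ≤ ∏ i ∈ Finset.univ.erase k, (1 / (1 - τ)) :=
        Finset.prod_le_prod (fun i _ => norm_nonneg _) (fun i _ => fac_bound hR hτ hz θ i)
    _ = _ := by simp

theorem seg_mem {n : ℕ} {R : Fin n → ℝ} (hR : ∀ i, 0 < R i) {z : Cn n} (hz : z ∈ OPol R)
    {s : ℝ} (hs : s ∈ Set.Ioo (-1/100 : ℝ) (101/100)) (θ : Fin n → ℝ) :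
    z + s • (tor R θ - z) ∈ CPol (fun i => 7/6 * R i) := by
  intro i
  have e : (z + s • (tor R θ - z)) i = ((1 - s : ℝ) : ℂ) * z i + (s : ℂ) * tor R θ i := by
    simp; ring
  rw [e]
  refine (norm_add_le _ _).trans ?_
  rw [norm_mul, norm_mul, tor_norm hR, Complex.norm_real, Complex.norm_real, Real.norm_eq_abs,
    Real.norm_eq_abs]
  have h1 : |1 - s| + |s| ≤ 51/50 := by
    rcases abs_cases (1 - s) with h | h <;> rcases abs_cases s with h' | h' <;>
      linarith [hs.1, hs.2]
  have h2 : |1 - s| * ‖z i‖ ≤ |1 - s| * R i :=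
    mul_le_mul_of_nonneg_left (hz i).le (abs_nonneg _)
  nlinarith [hR i]

theorem seg_mem' {n : ℕ} {R : Fin n → ℝ} (hR : ∀ i, 0 < R i) {z : Cn n} (hz : z ∈ OPol R)
    {s : ℝ} (hs : s ∈ Set.Icc (0 : ℝ) 1) (θ : Fin n → ℝ) :
    z + s • (tor R θ - z) ∈ CPol R := by
  intro i
  have e : (z + s • (tor R θ - z)) i = ((1 - s : ℝ) : ℂ) * z i + (s : ℂ) * tor R θ i := by
    simp; ring
  rw [e]
  refine (norm_add_le _ _).trans ?_
  rw [norm_mul, norm_mul, tor_norm hR, Complex.norm_real, Complex.norm_real, Real.norm_eq_abs,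
    Real.norm_eq_abs, abs_of_nonneg hs.1, abs_of_nonneg (by linarith [hs.2] : 0 ≤ 1 - s)]
  have h2 : (1 - s) * ‖z i‖ ≤ (1 - s) * R i :=
    mul_le_mul_of_nonneg_left (hz i).le (by linarith [hs.2])
  linarith

open MeasureTheory in
/-- derivative bound for the homotopy integral -/
theorem pompeiu_deriv {n : ℕ} {R : Fin n → ℝ} (hR : ∀ i, 0 < R i) {φ : Cn n → ℂ} {Y : Set (Cn n)}
    (hY : IsOpen Y) (hφ : ContDiffOn ℝ (⊤ : ℕ∞) φ Y)
    (hsub : CPol (fun i => 7/6 * R i) ⊆ Y) {τ : ℝ} (hτ : τ < 1) {z : Cn n}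
    (hz : ∀ i, ‖z i‖ ≤ τ * R i) {N : ℝ}
    (hN : ∀ w ∈ CPol R, ∀ k, ‖wzb (fderiv ℝ φ w) k‖ ≤ N)
    {s : ℝ} (hs : s ∈ Set.Ioo (-1/100 : ℝ) (101/100)) :
    ∃ d : ℂ, HasDerivAt (fun s : ℝ => ∫ θ in Set.Icc (0 : Fin n → ℝ) 1,
        φ (z + s • (tor R θ - z)) * ker R z θ) d s ∧
      (s ∈ Set.Ioc (0 : ℝ) 1 → ‖d‖ ≤ N * ∑ k, 2 * R k * (1 / (1 - τ)) ^ (n - 1)) := by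
  have hzO : z ∈ OPol R := fun i => (hz i).trans_lt (by nlinarith [hR i])
  have hdφ : ∀ w ∈ Y, HasFDerivAt φ (fderiv ℝ φ w) w := fun w hw =>
    ((hφ.contDiffAt (hY.mem_nhds hw)).differentiableAt (by simp)).hasFDerivAt
  have hΦ : ContDiffOn ℝ (⊤ : ℕ∞) (fun q : ℝ × (Fin n → ℝ) =>
      φ (z + q.1 • (tor R q.2 - z)) * ker R z q.2)
      (Set.Ioo (-1/100 : ℝ) (101/100) ×ˢ Set.univ) := by
    refine ContDiffOn.mul ?_ ((ker_smooth hR hzO).comp contDiff_snd).contDiffOn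
    refine hφ.comp (ContDiff.contDiffOn ?_) fun q hq => hsub (seg_mem hR hzO hq.1 _)
    exact contDiff_const.add (contDiff_fst.smul (((tor_smooth R).comp contDiff_snd).sub
      contDiff_const))
  obtain ⟨hi, hd⟩ := pi_hasFDerivAt volume
    (isCompact_Icc : IsCompact (Set.Icc (0 : Fin n → ℝ) 1)) isOpen_Ioo
    (hΦ.of_le (by exact_mod_cast le_top)) hs
  refine ⟨_, hd.hasDerivAt, fun hs01 => ?_⟩
  rw [ContinuousLinearMap.integral_apply hi]
  -- the point and its derivative
  set L : (Fin n → ℝ) → (Cn n →L[ℝ] ℂ) := fun θ => fderiv ℝ φ (z + s • (tor R θ - z)) with hL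
  have hint : ∀ θ, ((fderiv ℝ (fun q : ℝ × (Fin n → ℝ) =>
      φ (z + q.1 • (tor R q.2 - z)) * ker R z q.2) (s, θ)).comp
      (ContinuousLinearMap.inl ℝ ℝ (Fin n → ℝ))) 1 = L θ (tor R θ - z) * ker R z θ := by
    intro θ
    have hF : DifferentiableAt ℝ (fun q : ℝ × (Fin n → ℝ) =>
      φ (z + q.1 • (tor R q.2 - z)) * ker R z q.2) (s, θ) :=
      (hΦ.contDiffAt ((isOpen_Ioo.prod isOpen_univ).mem_nhds ⟨hs, trivial⟩)).differentiableAt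
        (by simp)
    have h1 := (HasFDerivAt.comp (f := fun e : ℝ => (e, θ)) s hF.hasFDerivAt
      (hasFDerivAt_prodMk_left (𝕜 := ℝ) s θ)).hasDerivAt
    have h2 : HasDerivAt (fun s : ℝ => z + s • (tor R θ - z)) (tor R θ - z) s := by
      simpa using ((hasDerivAt_id s).smul_const (tor R θ - z)).const_add z
    have h3 := ((hdφ _ (hsub (seg_mem hR hzO hs θ))).comp_hasDerivAt s h2).mul_const (ker R z θ)
    exact h1.unique h3
  -- the divergence part
  set F : Fin n → (Fin n → ℝ) → ℂ := fun k θ => φ (z + s • (tor R θ - z)) * kerE R z k θ with hFdef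
  have hFs : ∀ k, ContDiff ℝ (⊤ : ℕ∞) (F k) := by
    intro k
    refine ContDiff.mul ?_ (kerE_smooth hR hzO k)
    rw [← contDiffOn_univ]
    refine hφ.comp (ContDiff.contDiffOn ?_) fun q _ => hsub (seg_mem hR hzO hs _)
    exact contDiff_const.add (((tor_smooth R).sub contDiff_const).const_smul s)
  have hFd : ∀ k θ, fderiv ℝ (F k) θ (Pi.single k 1) =
      L θ (s • (Pi.single k (2 * Real.pi * Complex.I * tor R θ k) : Cn n)) * kerE R z k θ := by
    intro k θ
    have hdiff : HasFDerivAt (F k) (fderiv ℝ (F k) θ) (θ + (0 : ℝ) • Pi.single k 1) := by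
      rw [zero_smul, add_zero]
      exact ((hFs k).differentiable (by simp) θ).hasFDerivAt
    have h0 : HasDerivAt (fun t : ℝ => θ + t • (Pi.single k 1 : Fin n → ℝ)) (Pi.single k 1) 0 := by
      simpa using ((hasDerivAt_id (0 : ℝ)).smul_const (Pi.single k 1 : Fin n → ℝ)).const_add θ
    have h1 := hdiff.comp_hasDerivAt (0 : ℝ) h0
    have h2 : HasDerivAt (fun t : ℝ => z + s • (tor R (θ + t • Pi.single k 1) - z))
        (s • (Pi.single k (2 * Real.pi * Complex.I * tor R θ k) : Cn n)) 0 :=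
      (((tor_line R θ k).sub_const z).const_smul s).const_add z
    have h3' : HasFDerivAt φ (L θ) (z + s • (tor R (θ + (0 : ℝ) • Pi.single k 1) - z)) := by
      rw [zero_smul, add_zero]
      exact hdφ _ (hsub (seg_mem hR hzO hs θ))
    have h3 := (h3'.comp_hasDerivAt (0 : ℝ) h2).mul_const (kerE R z k θ)
    have e : (F k ∘ fun t : ℝ => θ + t • (Pi.single k 1 : Fin n → ℝ)) = fun t : ℝ =>
        (φ ∘ fun t : ℝ => z + s • (tor R (θ + t • Pi.single k 1) - z)) t * kerE R z k θ := by
      funext t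
      simp only [hFdef, Function.comp, kerE_line]
    rw [e] at h1
    exact h1.unique h3
  have hdiv := div_zero_int F (fun k => (hFs k).of_le (by exact_mod_cast le_top)) (by
    intro k θ
    have hk : kerE R z k (Function.update θ k 1) = kerE R z k (Function.update θ k 0) := by
      unfold kerE; rw [tor_update]
    simp only [hFdef, hk, tor_update])
  have hs0 : (s : ℂ) ≠ 0 := by exact_mod_cast hs01.1.ne'
  have hpi : (Real.pi : ℂ) ≠ 0 := by exact_mod_cast Real.pi_ne_zero
  have h2pi : (s : ℂ) * (2 * Real.pi * Complex.I) ≠ 0 := by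
    simp [hs0, hpi, Complex.I_ne_zero]
  have hcont1 : Continuous fun θ => ∑ k, fderiv ℝ (F k) θ (Pi.single k 1) := by
    refine continuous_finsetSum _ fun k _ => ?_
    exact ((hFs k).continuous_fderiv (by simp)).clm_apply continuous_const
  have hint1 : IntegrableOn (fun θ => ((s : ℂ) * (2 * Real.pi * Complex.I))⁻¹ *
      ∑ k, fderiv ℝ (F k) θ (Pi.single k 1)) (Set.Icc 0 1) :=
    (continuous_const.mul hcont1).integrableOn_Icc
  have hint2 := hi.apply_continuousLinearMap (1 : ℝ)
  have hdiv' : ∫ θ in Set.Icc (0 : Fin n → ℝ) 1, ((s : ℂ) * (2 * Real.pi * Complex.I))⁻¹ *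
      ∑ k, fderiv ℝ (F k) θ (Pi.single k 1) = 0 := by
    rw [integral_const_mul, hdiv, mul_zero]
  rw [← sub_zero (∫ θ in Set.Icc (0 : Fin n → ℝ) 1, _), ← hdiv', ← integral_sub hint2 hint1]
  refine int_box_bound fun θ => ?_
  have hcomp : L θ (tor R θ - z) * ker R z θ - ((s : ℂ) * (2 * Real.pi * Complex.I))⁻¹ *
      ∑ k, fderiv ℝ (F k) θ (Pi.single k 1) =
      ∑ k, wzb (L θ) k * ((starRingEnd ℂ) (tor R θ k) + (starRingEnd ℂ) (tor R θ k - z k) *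
        (tor R θ k / (tor R θ k - z k))) * kerE R z k θ := by
    rw [wirt_expand (L θ) (tor R θ - z), Finset.sum_mul, Finset.mul_sum, ← Finset.sum_sub_distrib]
    refine Finset.sum_congr rfl fun k _ => ?_
    rw [hFd, map_smul, wirt_single, ker_eq R z k θ, Complex.real_smul]
    have hv := tor_sub_ne hR hzO θ k
    simp only [Pi.sub_apply, map_mul, Complex.conj_I, Complex.conj_ofReal, map_ofNat]
    field_simp
    ring
  rw [hint θ, hcomp]
  have hmem := seg_mem' hR hzO ⟨hs01.1.le, hs01.2⟩ θ
  rw [Finset.mul_sum]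
  refine (norm_sum_le _ _).trans (Finset.sum_le_sum fun k _ => ?_)
  rw [norm_mul, norm_mul, ← mul_assoc]
  have hv := tor_sub_ne hR hzO θ k
  have hb : ‖(starRingEnd ℂ) (tor R θ k) + (starRingEnd ℂ) (tor R θ k - z k) *
        (tor R θ k / (tor R θ k - z k))‖ ≤ 2 * R k := by
    refine (norm_add_le _ _).trans ?_
    rw [norm_mul, norm_div, RCLike.norm_conj, RCLike.norm_conj, tor_norm hR,
      mul_div_cancel₀ _ (norm_ne_zero_iff.2 hv)]
    linarith
  have hN0 : 0 ≤ N := (norm_nonneg _).trans (hN _ hmem k)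
  refine mul_le_mul ?_ (kerE_bound hR hτ hz k θ) (norm_nonneg _)
    (mul_nonneg hN0 (by linarith [hR k]))
  exact mul_le_mul (hN _ hmem k) hb (norm_nonneg _) hN0

theorem pompeiu {n : ℕ} {R : Fin n → ℝ} (hR : ∀ i, 0 < R i) {φ : Cn n → ℂ} {Y : Set (Cn n)}
    (hY : IsOpen Y) (hφ : ContDiffOn ℝ (⊤ : ℕ∞) φ Y)
    (hsub : CPol (fun i => 7/6 * R i) ⊆ Y) {τ : ℝ} (hτ : τ < 1) {z : Cn n}
    (hz : ∀ i, ‖z i‖ ≤ τ * R i) {N : ℝ} (hN0 : 0 ≤ N)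
    (hN : ∀ w ∈ CPol R, ∀ k, ‖wzb (fderiv ℝ φ w) k‖ ≤ N) :
    ‖φ z - ∫ θ in Set.Icc (0 : Fin n → ℝ) 1, φ (tor R θ) * ker R z θ‖ ≤
      N * ∑ k, 2 * R k * (1 / (1 - τ)) ^ (n - 1) := by
  have hzO : z ∈ OPol R := fun i => (hz i).trans_lt (by nlinarith [hR i])
  set B := N * ∑ k, 2 * R k * (1 / (1 - τ)) ^ (n - 1) with hB
  have hB0 : 0 ≤ B := mul_nonneg hN0 (Finset.sum_nonneg fun k _ =>
    mul_nonneg (by linarith [hR k]) (pow_nonneg (by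
      have : 0 < 1 - τ := by linarith
      positivity) _))
  set J : ℝ → ℂ := fun s : ℝ => ∫ θ in Set.Icc (0 : Fin n → ℝ) 1,
        φ (z + s • (tor R θ - z)) * ker R z θ with hJ
  have hd : ∀ s ∈ Set.Ioo (-1/100 : ℝ) (101/100), ∃ d : ℂ, HasDerivAt J d s ∧
      (s ∈ Set.Ioc (0 : ℝ) 1 → ‖d‖ ≤ B) := fun s hs => pompeiu_deriv hR hY hφ hsub hτ hz hN hs
  choose! d hd1 hd2 using hd
  have hI : Set.Ioc (0 : ℝ) 1 ⊆ Set.Ioo (-1/100 : ℝ) (101/100) := fun s hs =>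
    ⟨by linarith [hs.1], by linarith [hs.2]⟩
  have hJ0 : J 0 = φ z := by
    simp only [hJ, zero_smul, add_zero]
    rw [MeasureTheory.integral_const_mul, ker_int_one hzO, mul_one]
  have hJ1 : J 1 = ∫ θ in Set.Icc (0 : Fin n → ℝ) 1, φ (tor R θ) * ker R z θ := by
    simp only [hJ, one_smul, add_sub_cancel]
  rw [← hJ0, ← hJ1]
  have hst : ∀ s ∈ Set.Ioc (0 : ℝ) 1, ‖J s - J 1‖ ≤ B := by
    intro s hs
    have := (convex_Ioc (0 : ℝ) 1).norm_image_sub_le_of_norm_hasDerivWithin_le (C := B)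
      (fun x hx => (hd1 x (hI hx)).hasDerivWithinAt) (fun x hx => hd2 x (hI hx) hx)
      (by simp : (1 : ℝ) ∈ Set.Ioc (0 : ℝ) 1) hs
    refine this.trans ?_
    have h : ‖s - 1‖ ≤ 1 := by
      rw [Real.norm_eq_abs, abs_le]; constructor <;> linarith [hs.1, hs.2]
    nlinarith
  have hc : ContinuousAt J 0 := (hd1 0 (by norm_num)).continuousAt
  have ht : Filter.Tendsto (fun s => ‖J s - J 1‖) (nhdsWithin 0 (Set.Ioi 0))
      (nhds ‖J 0 - J 1‖) :=
    ((hc.sub continuousAt_const).norm).tendsto.mono_left nhdsWithin_le_nhds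
  refine le_of_tendsto ht ?_
  filter_upwards [Ioc_mem_nhdsGT (zero_lt_one : (0 : ℝ) < 1)] with s hs
  exact hst s hs

/-! ### Growth classes -/

theorem eucNorm_nonneg {n : ℕ} (ζ : Cn n) : 0 ≤ eucNorm ζ := Real.sqrt_nonneg _

def Infra {n : ℕ} (R : Fin n → ℝ) (S : Set (Cn n)) (G : Pt n → ℂ) : Prop :=
  ∀ τ : ℝ, τ < 1 → ∀ h : ℝ, 0 < h → ∃ C : ℝ, 0 < C ∧ ∀ p : Pt n, (∀ i, ‖p.1 i‖ ≤ τ * R i) →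
    p.2 ∈ S → ‖G p‖ ≤ C * Real.exp (h * eucNorm p.2)

def Null {n : ℕ} (R : Fin n → ℝ) (S : Set (Cn n)) (G : Pt n → ℂ) : Prop :=
  ∀ τ : ℝ, τ < 1 → ∃ h C : ℝ, 0 < h ∧ 0 < C ∧ ∀ p : Pt n, (∀ i, ‖p.1 i‖ ≤ τ * R i) →
    p.2 ∈ S → ‖G p‖ ≤ C * Real.exp (-h * eucNorm p.2)

theorem pol_sub {n : ℕ} {R : Fin n → ℝ} (hR : ∀ i, 0 < R i) {τ : ℝ} (hτ : τ < 1) {z : Cn n}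
    (hz : ∀ i, ‖z i‖ ≤ τ * R i) : z ∈ OPol R := fun i =>
  (hz i).trans_lt (by nlinarith [hR i])

theorem Infra.congr {n : ℕ} {R : Fin n → ℝ} (hR : ∀ i, 0 < R i) {O S : Set (Cn n)} (hS : S ⊆ O)
    {G H : Pt n → ℂ} (h : Set.EqOn G H (OPol R ×ˢ O)) (hG : Infra R S G) : Infra R S H := by
  intro τ hτ ε hε
  obtain ⟨C, hC, hb⟩ := hG τ hτ ε hε
  refine ⟨C, hC, fun p hp hpS => ?_⟩
  rw [← h ⟨pol_sub hR hτ hp, hS hpS⟩]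
  exact hb p hp hpS

theorem Null.congr {n : ℕ} {R : Fin n → ℝ} (hR : ∀ i, 0 < R i) {O S : Set (Cn n)} (hS : S ⊆ O)
    {G H : Pt n → ℂ} (h : Set.EqOn G H (OPol R ×ˢ O)) (hG : Null R S G) : Null R S H := by
  intro τ hτ
  obtain ⟨ε, C, hε, hC, hb⟩ := hG τ hτ
  refine ⟨ε, C, hε, hC, fun p hp hpS => ?_⟩
  rw [← h ⟨pol_sub hR hτ hp, hS hpS⟩]
  exact hb p hp hpS

theorem Infra.sub {n : ℕ} {R : Fin n → ℝ} {S : Set (Cn n)}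
    {G H : Pt n → ℂ} (hG : Infra R S G) (hH : Infra R S H) : Infra R S (fun p => G p - H p) := by
  intro τ hτ ε hε
  obtain ⟨C, hC, hb⟩ := hG τ hτ ε hε
  obtain ⟨C', hC', hb'⟩ := hH τ hτ ε hε
  refine ⟨C + C', by positivity, fun p hp hpS => (norm_sub_le _ _).trans ?_⟩
  rw [add_mul]
  exact add_le_add (hb p hp hpS) (hb' p hp hpS)

theorem infra_zero {n : ℕ} (R : Fin n → ℝ) (S : Set (Cn n)) : Infra R S (fun _ => 0) := by
  intro τ _ ε _
  refine ⟨1, one_pos, fun p _ _ => ?_⟩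
  simp only [norm_zero]; positivity

theorem fderiv_sgl {n : ℕ} (G : Pt n → ℂ) (p : Pt n) (i : Fin n) (c : ℂ) :
    fderiv ℝ G p ((Pi.single i c : Cn n), 0) =
      opd (i, false) G p * c + opd (i, true) G p * (starRingEnd ℂ) c := by
  have := wirt_single ((fderiv ℝ G p).comp (ContinuousLinearMap.inl ℝ (Cn n) (Cn n))) i c
  simp only [wz, wzb, ContinuousLinearMap.comp_apply, ContinuousLinearMap.inl_apply] at this
  rw [this]
  simp [opd, dz, dzbar]

theorem slice_hasFDeriv {n : ℕ} {G : Pt n → ℂ} {z ζ : Cn n} {i : Fin n} {w : ℂ}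
    (hG : DifferentiableAt ℝ G (Function.update z i w, ζ)) :
    HasFDerivAt (fun w : ℂ => G (Function.update z i w, ζ))
      ((fderiv ℝ G (Function.update z i w, ζ)).comp
        ((ContinuousLinearMap.inl ℝ (Cn n) (Cn n)).comp
          (ContinuousLinearMap.single ℝ (fun _ : Fin n => ℂ) i))) w := by
  have h1 : HasFDerivAt (fun w : ℂ => Function.update z i w)
      (ContinuousLinearMap.single ℝ (fun _ : Fin n => ℂ) i) w := by
    have e : (fun w : ℂ => Function.update z i w) =
        fun w => Function.update z i 0 + ContinuousLinearMap.single ℝ (fun _ : Fin n => ℂ) i w := by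
      funext w j
      by_cases h : j = i
      · subst h; simp
      · simp [h]
    rw [e]
    exact (ContinuousLinearMap.hasFDerivAt _).const_add _
  have h2 := HasFDerivAt.comp w (hasFDerivAt_prodMk_left (𝕜 := ℝ) (Function.update z i w) ζ) h1
  exact HasFDerivAt.comp w hG.hasFDerivAt h2

theorem upd_pol {n : ℕ} {R : Fin n → ℝ} (hR : ∀ i, 0 < R i) {τ τ' : ℝ} (hτ : τ ≤ τ') {z : Cn n}
    (hz : ∀ i, ‖z i‖ ≤ τ * R i) (i : Fin n) {w : ℂ} (hw : ‖w - z i‖ ≤ (τ' - τ) * R i) :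
    ∀ j, ‖Function.update z i w j‖ ≤ τ' * R j := by
  intro j
  by_cases h : j = i
  · subst h
    rw [Function.update_self]
    have := norm_add_le (w - z j) (z j)
    rw [sub_add_cancel] at this
    linarith [hz j]
  · rw [Function.update_of_ne h]
    exact (hz j).trans (mul_le_mul_of_nonneg_right hτ (hR j).le)

theorem cauchy_step {n : ℕ} {R : Fin n → ℝ} (hR : ∀ i, 0 < R i) {O S : Set (Cn n)}
    (hO : IsOpen O) (hS : S ⊆ O) {G : Pt n → ℂ}
    (hG : ContDiffOn ℝ (⊤ : ℕ∞) G (OPol R ×ˢ O)) (i : Fin n)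
    (hbar : ∀ p ∈ OPol R ×ˢ O, opd (i, true) G p = 0) (hI : Infra R S G) :
    Infra R S (opd (i, false) G) := by
  have hU : IsOpen (OPol R ×ˢ O) := (OPol_open R).prod hO
  intro τ hτ h hh
  obtain ⟨τ', h1, h2⟩ : ∃ τ', τ < τ' ∧ τ' < 1 := exists_between hτ
  obtain ⟨C, hC, hb⟩ := hI τ' h2 h hh
  have hρ : 0 < (τ' - τ) * R i := mul_pos (by linarith) (hR i)
  refine ⟨C / ((τ' - τ) * R i), by positivity, fun p hp hpS => ?_⟩
  have hd : ∀ w : ℂ, ‖w - p.1 i‖ ≤ (τ' - τ) * R i →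
      HasDerivAt (fun w : ℂ => G (Function.update p.1 i w, p.2))
        (opd (i, false) G (Function.update p.1 i w, p.2)) w := by
    intro w hw
    have hm : ((Function.update p.1 i w, p.2) : Pt n) ∈ OPol R ×ˢ O :=
      ⟨pol_sub hR h2 (upd_pol hR h1.le hp i hw), hS hpS⟩
    have hs := slice_hasFDeriv (i := i) (w := w) (z := p.1) (ζ := p.2)
      ((hG.contDiffAt (hU.mem_nhds hm)).differentiableAt (by simp))
    have hlin : ∀ v : ℂ, ((fderiv ℝ G (Function.update p.1 i w, p.2)).comp
        ((ContinuousLinearMap.inl ℝ (Cn n) (Cn n)).comp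
          (ContinuousLinearMap.single ℝ (fun _ : Fin n => ℂ) i))) v =
          opd (i, false) G (Function.update p.1 i w, p.2) * v := by
      intro v
      have := fderiv_sgl G (Function.update p.1 i w, p.2) i v
      rw [hbar _ hm, zero_mul, add_zero] at this
      rw [← this]
      rfl
    have hc : DifferentiableAt ℂ (fun w : ℂ => G (Function.update p.1 i w, p.2)) w :=
      complexDiff_of_real hs (fun v => by rw [hlin, hlin, smul_eq_mul]; ring)
    have h3 := hc.hasDerivAt
    have h4 := hs.unique (h3.hasFDerivAt.restrictScalars ℝ)
    have h5 := congrArg (fun L : ℂ →L[ℝ] ℂ => L 1) h4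
    simp only [hlin] at h5
    have h6 : opd (i, false) G (Function.update p.1 i w, p.2) =
        deriv (fun w : ℂ => G (Function.update p.1 i w, p.2)) w := by
      simpa using h5
    rw [h6]
    exact h3
  have hcl : DiffContOnCl ℂ (fun w : ℂ => G (Function.update p.1 i w, p.2))
      (Metric.ball (p.1 i) ((τ' - τ) * R i)) := by
    apply DifferentiableOn.diffContOnCl
    intro w hw
    have : w ∈ Metric.closedBall (p.1 i) ((τ' - τ) * R i) := Metric.closure_ball_subset_closedBall hw
    rw [mem_closedBall_iff_norm] at this
    exact (hd w this).differentiableAt.differentiableWithinAt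
  have key := Complex.norm_deriv_le_of_forall_mem_sphere_norm_le hρ hcl
    (C := C * Real.exp (h * eucNorm p.2)) (fun w hw => by
      rw [mem_sphere_iff_norm] at hw
      exact hb (Function.update p.1 i w, p.2) (upd_pol hR h1.le hp i hw.le) hpS)
  rw [(hd (p.1 i) (by simpa using hρ.le)).deriv, Function.update_eq_self] at key
  calc _ ≤ _ := key
    _ = _ := by ring

theorem landau1d {χ χ' χ'' : ℝ → ℂ} {t M : ℝ} (ht : 0 < t)
    (h1 : ∀ x ∈ Set.Icc 0 t, HasDerivAt χ (χ' x) x)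
    (h2 : ∀ x ∈ Set.Icc 0 t, HasDerivAt χ' (χ'' x) x)
    (hM : ∀ x ∈ Set.Icc 0 t, ‖χ'' x‖ ≤ M) :
    ‖χ' 0‖ ≤ (‖χ t‖ + ‖χ 0‖) / t + M * t := by
  have h0 : (0 : ℝ) ∈ Set.Icc 0 t := ⟨le_rfl, ht.le⟩
  have htt : t ∈ Set.Icc 0 t := ⟨ht.le, le_rfl⟩
  have hM0 : 0 ≤ M := (norm_nonneg _).trans (hM 0 h0)
  have hA : ∀ x ∈ Set.Icc 0 t, ‖χ' x - χ' 0‖ ≤ M * t := by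
    intro x hx
    have := (convex_Icc (0 : ℝ) t).norm_image_sub_le_of_norm_hasDerivWithin_le
      (fun x hx => (h2 x hx).hasDerivWithinAt) hM h0 hx
    refine this.trans (mul_le_mul_of_nonneg_left ?_ hM0)
    rw [sub_zero, Real.norm_eq_abs, abs_of_nonneg hx.1]
    exact hx.2
  have hB := (convex_Icc (0 : ℝ) t).norm_image_sub_le_of_norm_hasDerivWithin_le
    (f := fun x => χ x - (x : ℂ) * χ' 0) (f' := fun x => χ' x - χ' 0) (C := M * t)
    (fun x hx => (((h1 x hx).sub (by
      simpa using ((hasDerivAt_id x).ofReal_comp).mul_const (χ' 0))).hasDerivWithinAt)) hA h0 htt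
  simp only [Complex.ofReal_zero, zero_mul, sub_zero, Real.norm_eq_abs, abs_of_pos ht] at hB
  have hC : ‖(t : ℂ) * χ' 0‖ ≤ ‖χ t‖ + ‖χ 0‖ + M * t * t := by
    have e : (t : ℂ) * χ' 0 = (χ t - χ 0) - (χ t - t * χ' 0 - χ 0) := by ring
    rw [e]
    exact (norm_sub_le _ _).trans (add_le_add (norm_sub_le _ _) hB)
  rw [norm_mul, Complex.norm_real, Real.norm_eq_abs, abs_of_pos ht] at hC
  have : (‖χ t‖ + ‖χ 0‖) / t + M * t = (‖χ t‖ + ‖χ 0‖ + M * t * t) / t := by field_simp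
  rw [this, le_div_iff₀ ht]
  linarith

theorem landau_step {n : ℕ} {R : Fin n → ℝ} (hR : ∀ i, 0 < R i) {O S : Set (Cn n)}
    (hO : IsOpen O) (hS : S ⊆ O) {G : Pt n → ℂ}
    (hG : ContDiffOn ℝ (⊤ : ℕ∞) G (OPol R ×ˢ O)) (i : Fin n)
    (hN : Null R S G) (hNbar : Null R S (opd (i, true) G))
    (h2nd : ∀ a b : Bool, Infra R S (opd (i, a) (opd (i, b) G))) :
    Null R S (opd (i, false) G) := by
  have hU : IsOpen (OPol R ×ˢ O) := (OPol_open R).prod hO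
  intro τ hτ
  obtain ⟨τ', h1, h2⟩ : ∃ τ', τ < τ' ∧ τ' < 1 := exists_between hτ
  obtain ⟨h, C, hh, hC, hb⟩ := hN τ' h2
  obtain ⟨k, C1, hk, hC1, hb1⟩ := hNbar τ hτ
  obtain ⟨A1, hA1, hB1⟩ := h2nd false false τ' h2 (h / 4) (by positivity)
  obtain ⟨A2, hA2, hB2⟩ := h2nd false true τ' h2 (h / 4) (by positivity)
  obtain ⟨A3, hA3, hB3⟩ := h2nd true false τ' h2 (h / 4) (by positivity)
  obtain ⟨A4, hA4, hB4⟩ := h2nd true true τ' h2 (h / 4) (by positivity)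
  set ρ := (τ' - τ) * R i with hρdef
  have hρ : 0 < ρ := mul_pos (by linarith) (hR i)
  refine ⟨min (h / 4) k, 2 * C / ρ + (A1 + A2 + A3 + A4) * ρ + C1, by positivity, by positivity,
    fun p hp hpS => ?_⟩
  set E := eucNorm p.2 with hE
  have hE0 : 0 ≤ E := eucNorm_nonneg _
  set t := ρ * Real.exp (-(h / 2) * E) with ht
  have htpos : 0 < t := by positivity
  have htρ : t ≤ ρ := by
    have : Real.exp (-(h / 2) * E) ≤ 1 := Real.exp_le_one_iff.2 (by nlinarith)
    nlinarith
  -- points of the segment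
  let q : ℝ → Pt n := fun x => (Function.update p.1 i (p.1 i + x), p.2)
  have hq0 : q 0 = p := by simp [q]
  have hqτ : ∀ x ∈ Set.Icc 0 t, ∀ j, ‖(q x).1 j‖ ≤ τ' * R j := by
    intro x hx
    refine upd_pol hR h1.le hp i ?_
    rw [add_sub_cancel_left, Complex.norm_real, Real.norm_eq_abs, abs_of_nonneg hx.1]
    exact hx.2.trans htρ
  have hqU : ∀ x ∈ Set.Icc 0 t, q x ∈ OPol R ×ˢ O := fun x hx =>
    ⟨pol_sub hR h2 (hqτ x hx), hS hpS⟩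
  have hder : ∀ H : Pt n → ℂ, ContDiffOn ℝ (⊤ : ℕ∞) H (OPol R ×ˢ O) → ∀ x ∈ Set.Icc 0 t,
      HasDerivAt (fun x => H (q x)) (opd (i, false) H (q x) + opd (i, true) H (q x)) x := by
    intro H hH x hx
    have hs := slice_hasFDeriv (i := i) (w := p.1 i + x) (z := p.1) (ζ := p.2)
      ((hH.contDiffAt (hU.mem_nhds (hqU x hx))).differentiableAt (by simp))
    have hl : HasDerivAt (fun x : ℝ => p.1 i + (x : ℂ)) 1 x := by
      simpa using ((hasDerivAt_id x).ofReal_comp).const_add (p.1 i)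
    have h3 := hs.comp_hasDerivAt x hl
    have e := fderiv_sgl H (q x) i 1
    simp only [map_one, mul_one] at e
    rw [← e]
    exact h3
  have key := landau1d (χ := fun x => G (q x))
    (χ' := fun x => opd (i, false) G (q x) + opd (i, true) G (q x))
    (χ'' := fun x => (opd (i, false) (opd (i, false) G) (q x) + opd (i, true) (opd (i, false) G) (q x))
      + (opd (i, false) (opd (i, true) G) (q x) + opd (i, true) (opd (i, true) G) (q x)))
    (M := (A1 + A2 + A3 + A4) * Real.exp (h / 4 * E)) htpos (hder G hG)
    (fun x hx => (hder _ (opd_smooth hU _ hG) x hx).add (hder _ (opd_smooth hU _ hG) x hx))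
    (fun x hx => by
      have b1 := hB1 (q x) (hqτ x hx) hpS
      have b2 := hB2 (q x) (hqτ x hx) hpS
      have b3 := hB3 (q x) (hqτ x hx) hpS
      have b4 := hB4 (q x) (hqτ x hx) hpS
      have n1 := norm_add_le
        (opd (i, false) (opd (i, false) G) (q x) + opd (i, true) (opd (i, false) G) (q x))
        (opd (i, false) (opd (i, true) G) (q x) + opd (i, true) (opd (i, true) G) (q x))
      have n2 := norm_add_le (opd (i, false) (opd (i, false) G) (q x))
        (opd (i, true) (opd (i, false) G) (q x))
      have n3 := norm_add_le (opd (i, false) (opd (i, true) G) (q x))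
        (opd (i, true) (opd (i, true) G) (q x))
      change _ ≤ A1 * Real.exp (h / 4 * E) at b1
      change _ ≤ A2 * Real.exp (h / 4 * E) at b2
      change _ ≤ A3 * Real.exp (h / 4 * E) at b3
      change _ ≤ A4 * Real.exp (h / 4 * E) at b4
      linarith)
  simp only [hq0] at key
  have bt : ‖G (q t)‖ ≤ C * Real.exp (-h * E) := hb (q t) (hqτ t ⟨htpos.le, le_rfl⟩) hpS
  have b0 : ‖G p‖ ≤ C * Real.exp (-h * E) := by
    have := hb (q 0) (hqτ 0 ⟨le_rfl, htpos.le⟩) (by rw [hq0]; exact hpS)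
    rwa [hq0] at this
  have bbar : ‖opd (i, true) G p‖ ≤ C1 * Real.exp (-k * E) := hb1 p hp hpS
  have hm1 : Real.exp (-(h / 2) * E) ≤ Real.exp (-(min (h / 4) k) * E) :=
    Real.exp_le_exp.2 (by nlinarith [min_le_left (h / 4) k])
  have hm2 : Real.exp (-(h / 4) * E) ≤ Real.exp (-(min (h / 4) k) * E) :=
    Real.exp_le_exp.2 (by nlinarith [min_le_left (h / 4) k])
  have hm3 : Real.exp (-k * E) ≤ Real.exp (-(min (h / 4) k) * E) :=
    Real.exp_le_exp.2 (by nlinarith [min_le_right (h / 4) k])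
  have c1 : (‖G (q t)‖ + ‖G p‖) / t ≤ 2 * C / ρ * Real.exp (-(min (h / 4) k) * E) := by
    calc (‖G (q t)‖ + ‖G p‖) / t ≤ (2 * C * Real.exp (-h * E)) / t := by gcongr; linarith
      _ = 2 * C / ρ * Real.exp (-(h / 2) * E) := by
        have : Real.exp (-h * E) = Real.exp (-(h / 2) * E) * Real.exp (-(h / 2) * E) := by
          rw [← Real.exp_add]; ring_nf
        rw [this, ht]; field_simp
      _ ≤ _ := by gcongr
  have c2 : (A1 + A2 + A3 + A4) * Real.exp (h / 4 * E) * t ≤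
      (A1 + A2 + A3 + A4) * ρ * Real.exp (-(min (h / 4) k) * E) := by
    calc (A1 + A2 + A3 + A4) * Real.exp (h / 4 * E) * t
        = (A1 + A2 + A3 + A4) * ρ * Real.exp (-(h / 4) * E) := by
          have : Real.exp (-(h / 4) * E) = Real.exp (h / 4 * E) * Real.exp (-(h / 2) * E) := by
            rw [← Real.exp_add]; ring_nf
          rw [this, ht]; ring
      _ ≤ _ := by gcongr
  have c3 : C1 * Real.exp (-k * E) ≤ C1 * Real.exp (-(min (h / 4) k) * E) := by gcongr
  have hfin : ‖opd (i, false) G p‖ ≤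
      ‖opd (i, false) G p + opd (i, true) G p‖ + ‖opd (i, true) G p‖ := by
    have := norm_sub_le (opd (i, false) G p + opd (i, true) G p) (opd (i, true) G p)
    rwa [add_sub_cancel_right] at this
  rw [add_mul, add_mul]
  linarith

theorem all_null {n : ℕ} {R : Fin n → ℝ} (hR : ∀ i, 0 < R i) {O S : Set (Cn n)}
    (hO : IsOpen O) (hS : S ⊆ O) {f u : Pt n → ℂ}
    (hf : ContDiffOn ℝ (⊤ : ℕ∞) f (OPol R ×ˢ O)) (hu : ContDiffOn ℝ (⊤ : ℕ∞) u (OPol R ×ˢ O))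
    (hubar : ∀ i, ∀ p ∈ OPol R ×ˢ O, opd (i, true) u p = 0)
    (hfI : ∀ w, Infra R S (Dw w f)) (hfN : ∀ w j, (j, true) ∈ w → Null R S (Dw w f))
    (huI : Infra R S u) (hg : Null R S (fun p => f p - u p)) :
    ∀ w, Null R S (Dw w (fun p => f p - u p)) := by
  have hU : IsOpen (OPol R ×ˢ O) := (OPol_open R).prod hO
  have hzero : ∀ w : List (Fin n × Bool), ∀ p ∈ OPol R ×ˢ O, Dw w (fun _ : Pt n => (0 : ℂ)) p = 0 := by
    intro w
    induction w with
    | nil => intro p _; rfl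
    | cons a w ih =>
      intro p hp
      rw [Dw_cons, opd_congr hU a (g := fun _ => 0) (fun q hq => ih q hq) hp, opd_apply]
      simp
  have huN : ∀ w j, (j, true) ∈ w → ∀ p ∈ OPol R ×ˢ O, Dw w u p = 0 := by
    intro w j hj p hp
    have hperm : w.Perm (w.erase (j, true) ++ [(j, true)]) :=
      (List.perm_cons_erase hj).trans (List.perm_append_singleton _ _).symm
    rw [Dw_perm hU hperm hu hp, Dw_append]
    have e := Dw_congr hU (w.erase (j, true)) (f := Dw [(j, true)] u) (g := fun _ => 0)
      (fun q hq => hubar j q hq) hp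
    rw [e]
    exact hzero _ p hp
  have huIw : ∀ w, Infra R S (Dw w u) := by
    intro w
    induction w with
    | nil => exact huI
    | cons a w ih =>
      rcases a with ⟨i, b⟩
      cases b with
      | true =>
        exact (infra_zero R S).congr hR hS fun p hp => (huN _ i (by simp) p hp).symm
      | false =>
        exact cauchy_step hR hO hS (Dw_smooth hU w hu) i
          (fun p hp => huN ((i, true) :: w) i (by simp) p hp) ih
  have hgI : ∀ w, Infra R S (Dw w (fun p => f p - u p)) := fun w =>
    ((hfI w).sub (huIw w)).congr hR hS (Dw_sub hU w hf hu).symm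
  have hgN : ∀ w j, (j, true) ∈ w → Null R S (Dw w (fun p => f p - u p)) := by
    intro w j hj
    refine (hfN w j hj).congr hR hS fun p hp => ?_
    rw [Dw_sub hU w hf hu hp]
    simp only
    rw [huN w j hj p hp, sub_zero]
  intro w
  induction w with
  | nil => exact hg
  | cons a w ih =>
    rcases a with ⟨i, b⟩
    cases b with
    | true => exact hgN _ i (by simp)
    | false =>
      exact landau_step hR hO hS (Dw_smooth hU w (hf.sub hu)) i ih
        (hgN ((i, true) :: w) i (by simp)) (fun a b => hgI ((i, a) :: (i, b) :: w))

theorem dzbar_zero_of_holo {n : ℕ} {u : Pt n → ℂ} {p : Pt n} (h : DifferentiableAt ℂ u p)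
    (i : Fin n) : opd (i, true) u p = 0 := by
  have h1 := (h.hasFDerivAt.restrictScalars ℝ).fderiv
  rw [opd_apply, h1]
  have e : ((Pi.single i Complex.I : Cn n), (0 : Cn n)) =
      Complex.I • ((Pi.single i 1 : Cn n), (0 : Cn n)) := by
    rw [Prod.smul_mk, smul_zero, ← Pi.single_smul]; simp
  rw [e]
  simp only [ContinuousLinearMap.coe_restrictScalars', map_smul, sgnI, if_true, smul_eq_mul]
  rw [← mul_assoc, Complex.I_mul_I]
  ring

theorem wzb_slice {n : ℕ} {f : Pt n → ℂ} {w ζ : Cn n} (h : DifferentiableAt ℝ f (w, ζ))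
    (k : Fin n) : wzb (fderiv ℝ (fun w => f (w, ζ)) w) k = dzbar k f (w, ζ) := by
  have h2 := HasFDerivAt.comp w h.hasFDerivAt (hasFDerivAt_prodMk_left (𝕜 := ℝ) w ζ)
  have h3 : fderiv ℝ (fun w => f (w, ζ)) w = _ := h2.fderiv
  rw [h3]
  simp [wzb, dzbar]

theorem CPol_mono {n : ℕ} {R R' : Fin n → ℝ} (h : ∀ i, R i ≤ R' i) : CPol R ⊆ CPol R' :=
  fun _ hz i => (hz i).trans (h i)

theorem core {n : ℕ} {R : Fin n → ℝ} (hR : ∀ i, 0 < R i) {O S : Set (Cn n)} {X : Set (Pt n)}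
    (hX : IsOpen X) (hO : IsOpen O) (hS : S ⊆ O) {f : Pt n → ℂ}
    (hf : ContDiffOn ℝ (⊤ : ℕ∞) f X)
    (hOX : ∀ w ∈ CPol (fun i => 7/6 * R i), ∀ ζ ∈ O, (w, ζ) ∈ X)
    (hh : ∀ w ∈ CPol R, ∀ ζ ∈ O, DifferentiableAt ℂ (fun ζ => f (w, ζ)) ζ)
    (hI : ∀ α β : Fin n → ℕ, ∀ h : ℝ, 0 < h → ∃ C : ℝ, 0 < C ∧ ∀ z ∈ CPol R, ∀ ζ ∈ S,
      ‖mixedDeriv α β f (z, ζ)‖ ≤ C * Real.exp (h * eucNorm ζ))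
    (hN : ∀ j, ∀ α β : Fin n → ℕ, ∃ h C : ℝ, 0 < h ∧ 0 < C ∧ ∀ z ∈ CPol R, ∀ ζ ∈ S,
      ‖mixedDeriv α β (dzbar j f) (z, ζ)‖ ≤ C * Real.exp (-h * eucNorm ζ)) :
    (∀ w, Null R S (Dw w (fun p => f p - cau R f p))) ∧ Infra R S (cau R f) := by
  have hOC : OPol R ⊆ CPol R := fun z hz i => (hz i).le
  have hC' : CPol R ⊆ CPol (fun i => 7/6 * R i) := CPol_mono fun i => by linarith [hR i]
  have hU : IsOpen (OPol R ×ˢ O) := (OPol_open R).prod hO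
  have hUX : OPol R ×ˢ O ⊆ X := fun p hp => hOX p.1 (hC' (hOC hp.1)) p.2 hp.2
  have hfU := hf.mono hUX
  have hX' : ∀ w ∈ CPol R, ∀ ζ ∈ O, (w, ζ) ∈ X := fun w hw => hOX w (hC' hw)
  have hu := cau_smooth hR hO hf hX'
  have hm0 : ∀ (G : Pt n → ℂ), mixedDeriv 0 0 G = G := by
    intro G
    rw [mixed_eq]
    have : nrm (n := n) 0 0 = [] := by simp [nrm]
    rw [this]; rfl
  have huI : Infra R S (cau R f) := by
    intro τ hτ h hh'
    obtain ⟨C, hC, hb⟩ := hI 0 0 h hh'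
    have h1 : 0 < 1 / (1 - τ) := one_div_pos.2 (by linarith)
    refine ⟨C * (1 / (1 - τ)) ^ n, by positivity, fun p hp hpS => ?_⟩
    have := cau_bound hR hτ (f := f) hp (M := C * Real.exp (h * eucNorm p.2)) (fun w hw => by
      have := hb w hw p.2 hpS
      rwa [hm0] at this)
    calc _ ≤ _ := this
      _ = _ := by ring
  refine ⟨?_, huI⟩
  refine all_null hR hO hS hfU hu
    (fun i p hp => dzbar_zero_of_holo (cau_holo hR hO hf hX' hh hp) i) ?_ ?_ huI ?_
  · intro w τ hτ h hh'
    obtain ⟨α, β, hp⟩ := exists_nrm w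
    obtain ⟨C, hC, hb⟩ := hI α β h hh'
    refine ⟨C, hC, fun p hpτ hpS => ?_⟩
    have hz := pol_sub hR hτ hpτ
    rw [Dw_perm hU hp hfU ⟨hz, hS hpS⟩, ← mixed_eq]
    exact hb p.1 (hOC hz) p.2 hpS
  · intro w j hj τ hτ
    have hperm : w.Perm (w.erase (j, true) ++ [(j, true)]) :=
      (List.perm_cons_erase hj).trans (List.perm_append_singleton _ _).symm
    obtain ⟨α, β, hp⟩ := exists_nrm (w.erase (j, true))
    obtain ⟨h, C, hh', hC, hb⟩ := hN j α β
    refine ⟨h, C, hh', hC, fun p hpτ hpS => ?_⟩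
    have hz := pol_sub hR hτ hpτ
    have hpU : p ∈ OPol R ×ˢ O := ⟨hz, hS hpS⟩
    have e : Dw [(j, true)] f = dzbar j f := by simp [Dw, opd]
    rw [Dw_perm hU hperm hfU hpU, Dw_append,
      Dw_perm hU hp (Dw_smooth hU [(j, true)] hfU) hpU, ← mixed_eq, e]
    exact hb p.1 (hOC hz) p.2 hpS
  · intro τ hτ
    choose h C hh' hC hb using fun j => hN j 0 0
    obtain ⟨h0, hh0, hle⟩ : ∃ h0 : ℝ, 0 < h0 ∧ ∀ j, h0 ≤ h j := by
      rcases isEmpty_or_nonempty (Fin n) with he | he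
      · exact ⟨1, one_pos, fun j => he.elim j⟩
      · obtain ⟨j0, hj0⟩ := Finite.exists_min h
        exact ⟨h j0, hh' j0, hj0⟩
    have h1 : 0 < 1 / (1 - τ) := one_div_pos.2 (by linarith)
    have hB0 : 0 ≤ ∑ k, 2 * R k * (1 / (1 - τ)) ^ (n - 1) :=
      Finset.sum_nonneg fun k _ => by have := hR k; positivity
    have hC0 : 0 ≤ ∑ j, C j := Finset.sum_nonneg fun j _ => (hC j).le
    refine ⟨h0, (∑ j, C j) * (∑ k, 2 * R k * (1 / (1 - τ)) ^ (n - 1)) + 1, hh0, by positivity,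
      fun p hp hpS => ?_⟩
    have hpO := hS hpS
    have key := pompeiu hR (φ := fun w => f (w, p.2)) (Y := {w | (w, p.2) ∈ X})
      (hX.preimage (by fun_prop : Continuous fun w : Cn n => (w, p.2)))
      (hf.comp (by fun_prop : ContDiff ℝ (⊤ : ℕ∞) fun w : Cn n => (w, p.2)).contDiffOn
        (fun w hw => hw))
      (fun w hw => hOX w hw p.2 hpO) hτ hp (N := (∑ j, C j) * Real.exp (-h0 * eucNorm p.2))
      (by positivity) (fun w hw k => by
        rw [wzb_slice ((hf.contDiffAt (hX.mem_nhds (hX' w hw p.2 hpO))).differentiableAt (by simp))]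
        have := hb k w hw p.2 hpS
        rw [hm0] at this
        refine this.trans ?_
        gcongr
        · exact Finset.single_le_sum (fun j _ => (hC j).le) (Finset.mem_univ k)
        · exact eucNorm_nonneg _
        · exact hle k)
    refine key.trans ?_
    have := Real.exp_pos (-h0 * eucNorm p.2)
    nlinarith
theorem wedge_interior {n : ℕ} {V W : Set (Pt n)} (hV : IsOpen V) (h : IsInfWedge V W) :
    IsInfWedge V (interior W) := by
  refine ⟨interior_subset.trans h.1, fun K hK => ?_⟩
  obtain ⟨L, hL, h1, h2⟩ := exists_compact_between hK.1 hV hK.2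
  obtain ⟨δ, hδ, hb⟩ := h.2 L ⟨by rwa [hL.isClosed.closure_eq], by rwa [hL.isClosed.closure_eq]⟩
  refine ⟨δ, hδ, fun p hp t ht => ?_⟩
  have ht0 : t ≠ 0 := (hδ.trans ht).ne'
  have hcont : Continuous fun q : Pt n => ((q.1, t⁻¹ • q.2) : Pt n) := by fun_prop
  refine mem_interior.2 ⟨{q | (q.1, t⁻¹ • q.2) ∈ interior L}, ?_,
    isOpen_interior.preimage hcont, ?_⟩
  · intro q hq
    have := hb _ (interior_subset hq) t ht
    simpa [smul_smul, mul_inv_cancel₀ ht0] using this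
  · have := h1 (subset_closure hp)
    simpa [smul_smul, inv_mul_cancel₀ ht0] using this

theorem slab {n : ℕ} {V W : Set (Pt n)} (h : IsInfWedge V W) {Z L : Set (Cn n)}
    (hZ : IsCompact Z) (hL : IsCompact L) (hZL : Z ×ˢ L ⊆ V) :
    ∃ δ : ℝ, 0 < δ ∧ ∀ z ∈ Z, ∀ ζ ∈ L, ∀ t : ℝ, δ < t → (z, t • ζ) ∈ W := by
  have hc := hZ.prod hL
  obtain ⟨δ, hδ, hb⟩ := h.2 (Z ×ˢ L) ⟨by rwa [hc.isClosed.closure_eq], by rwa [hc.isClosed.closure_eq]⟩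
  exact ⟨δ, hδ, fun z hz ζ hζ t ht => hb (z, ζ) ⟨hz, hζ⟩ t ht⟩

theorem tube_open {n : ℕ} {X : Set (Pt n)} (hX : IsOpen X) {Z : Set (Cn n)} (hZ : IsCompact Z) :
    IsOpen {ζ : Cn n | ∀ z ∈ Z, (z, ζ) ∈ X} := by
  rw [isOpen_iff_eventually]
  intro ζ hζ
  refine hZ.eventually_forall_of_forall_eventually fun z hz => ?_
  have : Continuous fun q : Cn n × Cn n => ((q.2, q.1) : Pt n) := by fun_prop
  exact (hX.preimage this).mem_nhds (hζ z hz)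

theorem cone_open {n : ℕ} {L : Set (Cn n)} (hL : IsOpen L) :
    IsOpen {ζ : Cn n | ∃ t : ℝ, 0 < t ∧ ∃ η ∈ L, ζ = t • η} := by
  have : {ζ : Cn n | ∃ t : ℝ, 0 < t ∧ ∃ η ∈ L, ζ = t • η} =
      ⋃ t : ℝ, ⋃ _ : 0 < t, {ζ : Cn n | t⁻¹ • ζ ∈ L} := by
    ext ζ
    simp only [Set.mem_setOf_eq, Set.mem_iUnion, exists_prop]
    constructor
    · rintro ⟨t, ht, η, hη, rfl⟩
      exact ⟨t, ht, by rwa [smul_smul, inv_mul_cancel₀ ht.ne', one_smul]⟩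
    · rintro ⟨t, ht, h⟩
      exact ⟨t, ht, _, h, by rw [smul_smul, mul_inv_cancel₀ ht.ne', one_smul]⟩
  rw [this]
  exact isOpen_iUnion fun t => isOpen_iUnion fun _ => hL.preimage (continuous_const_smul _)

/-- The local data over a relatively compact subcone. -/
theorem local_data {n : ℕ} {r : Fin n → ℝ} (hr : ∀ i, 0 < r i) {Γ : Set (Cn n)}
    (hΓ : IsOpen Γ) (hΓcone : ∀ ζ ∈ Γ, ∀ t : ℝ, 0 < t → t • ζ ∈ Γ)
    {f : Pt n → ℂ} {W : Set (Pt n)} (hf : IsSymbolInf (OPol r ×ˢ Γ) W f)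
    {O : Set (Cn n)} (hO : O = {ζ : Cn n | ∀ z ∈ CPol (fun i => 7/6 * (3/4 * r i)), (z, ζ) ∈ interior W})
    {r' : Fin n → ℝ} (hr' : ∀ i, r' i = r i / 2)
    {V' : Set (Pt n)} (hV'c : IsCone V') (hV' : ConeRelCpt V' (OPol r' ×ˢ Γ)) :
    ∃ S : Set (Cn n), S ⊆ O ∧ IsInfWedge V' (V' ∩ (OPol r' ×ˢ S)) ∧
      (∀ α β : Fin n → ℕ, ∀ h : ℝ, 0 < h → ∃ C : ℝ, 0 < C ∧
        ∀ z ∈ CPol (fun i => 3/4 * r i), ∀ ζ ∈ S,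
        ‖mixedDeriv α β f (z, ζ)‖ ≤ C * Real.exp (h * eucNorm ζ)) ∧
      (∀ j, ∀ α β : Fin n → ℕ, ∃ h C : ℝ, 0 < h ∧ 0 < C ∧
        ∀ z ∈ CPol (fun i => 3/4 * r i), ∀ ζ ∈ S,
        ‖mixedDeriv α β (dzbar j f) (z, ζ)‖ ≤ C * Real.exp (-h * eucNorm ζ)) := by
  obtain ⟨hW, -, hsym, hnull⟩ := hf
  obtain ⟨K, ⟨hKc, hKV⟩, hKeq⟩ := hV'
  have hLc : IsCompact (Prod.snd '' closure K) := hKc.image continuous_snd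
  have hLΓ : Prod.snd '' closure K ⊆ Γ := by
    rintro _ ⟨p, hp, rfl⟩; exact (hKV hp).2
  obtain ⟨L, hLo, hL1, hL2, hL3⟩ := exists_open_between_and_isCompact_closure hLc hΓ hLΓ
  set CL : Set (Cn n) := {ζ : Cn n | ∃ t : ℝ, 0 < t ∧ ∃ η ∈ L, ζ = t • η} with hCL
  set V2 : Set (Pt n) := OPol (fun i => 15/16 * r i) ×ˢ CL with hV2
  have hV2o : IsOpen V2 := (OPol_open _).prod (cone_open hLo)
  have hV2c : IsCone V2 := by
    rintro p ⟨h1, s, hs, η, hη, he⟩ t ht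
    exact ⟨h1, t * s, mul_pos ht hs, η, hη, by simp only [he, smul_smul]⟩
  have hV2r : ConeRelCpt V2 (OPol r ×ˢ Γ) := by
    refine ⟨OPol (fun i => 15/16 * r i) ×ˢ L, ⟨?_, ?_⟩, ?_⟩
    · rw [closure_prod_eq]
      refine IsCompact.prod ?_ hL3
      exact (CPol_compact (fun i => 15/16 * r i)).of_isClosed_subset isClosed_closure
        (closure_minimal (fun z hz i => (hz i).le) (CPol_compact _).isClosed)
    · rw [closure_prod_eq]
      refine Set.prod_mono ?_ hL2
      refine (closure_minimal (t := CPol (fun i => 15/16 * r i)) (fun z hz i => (hz i).le)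
        (CPol_compact _).isClosed).trans ?_
      exact fun z hz i => (hz i).trans_lt (by linarith [hr i])
    · ext p
      constructor
      · rintro ⟨h1, t, ht, η, hη, he⟩
        exact ⟨t, ht, (p.1, η), ⟨h1, hη⟩, Prod.ext rfl he⟩
      · rintro ⟨t, ht, q, ⟨h1, h2⟩, rfl⟩
        exact ⟨h1, t, ht, q.2, h2, rfl⟩
  obtain ⟨W2, -, hW2, hb2⟩ := hsym V2 hV2o hV2c hV2r
  have hnull' : ∀ i : Fin n, ∃ W' : Set (Pt n), IsInfWedge V2 W' ∧
      ∀ α β : Fin n → ℕ, ∃ h C : ℝ, 0 < h ∧ 0 < C ∧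
        ∀ p ∈ W', ‖mixedDeriv α β (dzbar i f) p‖ ≤ C * Real.exp (-h * eucNorm p.2) := by
    intro i
    obtain ⟨Wi, -, -, h⟩ := hnull i
    obtain ⟨W', -, h1, h2⟩ := h V2 hV2o hV2c hV2r
    exact ⟨W', h1, h2⟩
  choose W3 hW3 hb3 using hnull'
  have hDo : IsOpen (OPol r ×ˢ Γ) := (OPol_open r).prod hΓ
  set Z : Set (Cn n) := CPol (fun i => 7/6 * (3/4 * r i)) with hZ
  have hZc : IsCompact Z := CPol_compact _
  have hRZ : CPol (fun i => 3/4 * r i) ⊆ Z := CPol_mono fun i => by linarith [hr i]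
  refine ⟨{ζ | ζ ∈ O ∧ ∀ z ∈ Z, (z, ζ) ∈ W2 ∧ ∀ i, (z, ζ) ∈ W3 i}, fun ζ h => h.1,
    ⟨Set.inter_subset_left, ?_⟩, ?_, ?_⟩
  · rintro K1 ⟨hK1c, hK1V⟩
    have hL1c : IsCompact (Prod.snd '' closure K1) := hK1c.image continuous_snd
    have hsub : Prod.snd '' closure K1 ⊆ CL := by
      rintro _ ⟨p, hp, rfl⟩
      have := hK1V hp
      rw [hKeq] at this
      obtain ⟨t, ht, q, hq, rfl⟩ := this
      exact ⟨t, ht, q.2, hL1 ⟨q, subset_closure hq, rfl⟩, rfl⟩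
    have hsub2 : Z ×ˢ (Prod.snd '' closure K1) ⊆ V2 :=
      Set.prod_mono (fun z hz i => (hz i).trans_lt (by linarith [hr i])) hsub
    have hsub3 : Z ×ˢ (Prod.snd '' closure K1) ⊆ OPol r ×ˢ Γ := by
      refine Set.prod_mono (fun z hz i => (hz i).trans_lt (by linarith [hr i])) ?_
      intro ζ hζ
      obtain ⟨t, ht, η, hη, rfl⟩ := hsub hζ
      exact hΓcone _ (hL2 (subset_closure hη)) t ht
    obtain ⟨δ1, hδ1, d1⟩ := slab (wedge_interior hDo hW) hZc hL1c hsub3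
    obtain ⟨δ2, hδ2, d2⟩ := slab hW2 hZc hL1c hsub2
    choose δ3 hδ3 d3 using fun i => slab (hW3 i) hZc hL1c hsub2
    have h0 : 0 ≤ ∑ i, δ3 i := Finset.sum_nonneg fun i _ => (hδ3 i).le
    refine ⟨δ1 + δ2 + ∑ i, δ3 i, by positivity, fun p hp t ht => ?_⟩
    have hpc := subset_closure hp
    have hm : p.2 ∈ Prod.snd '' closure K1 := ⟨p, hpc, rfl⟩
    have hpV := hK1V hpc
    refine ⟨hV'c p hpV t (by linarith), ?_, ?_, ?_⟩
    · rw [hKeq] at hpV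
      obtain ⟨t, ht, q, hq, rfl⟩ := hpV
      exact (hKV (subset_closure hq)).1
    · rw [hO]
      exact fun z hz => d1 z hz _ hm t (by linarith)
    · refine fun z hz => ⟨d2 z hz _ hm t (by linarith), fun i => d3 i z hz _ hm t ?_⟩
      have := Finset.single_le_sum (f := δ3) (fun i _ => (hδ3 i).le) (Finset.mem_univ i)
      linarith
  · intro α β h hh
    obtain ⟨C, hC, hb⟩ := hb2 α β h hh
    exact ⟨C, hC, fun z hz ζ hζ => hb (z, ζ) (hζ.2 z (hRZ hz)).1⟩
  · intro j α β
    obtain ⟨h, C, hh, hC, hb⟩ := hb3 j α β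
    exact ⟨h, C, hh, hC, fun z hz ζ hζ => hb (z, ζ) ((hζ.2 z (hRZ hz)).2 j)⟩

/-- (Surjectivity on stalks of `ι : 𝔖/𝔑 → 𝔖^∞/𝔑^∞`.) For every symbol
of `C^∞`-type `f ∈ 𝔖^∞(D × Γ)` there are a polydisc `D'` with closure contained in `D`
and `g ∈ 𝔑^∞(D' × Γ)` such that `f − g` is holomorphic on an infinitesimal wedge of type
`D' × Γ` and `f − g ∈ 𝔖(D' × Γ)`. -/
theorem symbolInf_holomorphic_representative {n : ℕ}
    (r : Fin n → ℝ) (hr : ∀ i, 0 < r i)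
    (Γ : Set (Cn n)) (hΓopen : IsOpen Γ) (hΓ0 : (0 : Cn n) ∉ Γ)
    (hΓcone : ∀ ζ ∈ Γ, ∀ t : ℝ, 0 < t → t • ζ ∈ Γ) (hΓconv : Convex ℝ Γ)
    (D : Set (Cn n)) (hD : D = {z : Cn n | ∀ i, ‖z i‖ < r i})
    (f : Pt n → ℂ) (W : Set (Pt n)) (hf : IsSymbolInf (D ×ˢ Γ) W f) :
    ∃ (c : Cn n) (r' : Fin n → ℝ), (∀ i, 0 < r' i) ∧
      {z : Cn n | ∀ i, ‖z i - c i‖ ≤ r' i} ⊆ D ∧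
      ∃ (g : Pt n → ℂ) (Wg : Set (Pt n)),
        IsNullSymbolInf ({z : Cn n | ∀ i, ‖z i - c i‖ < r' i} ×ˢ Γ) Wg g ∧
        ∃ Ws : Set (Pt n),
          IsSymbol ({z : Cn n | ∀ i, ‖z i - c i‖ < r' i} ×ˢ Γ) Ws
            (fun x => f x - g x) := by
  have hDr : D = OPol r := hD
  rw [hDr] at hf
  have hD' : {z : Cn n | ∀ i, ‖z i - (0 : Cn n) i‖ < r i / 2} = OPol (fun i => r i / 2) := by
    ext z; simp [OPol]
  refine ⟨0, fun i => r i / 2, fun i => half_pos (hr i), ?_, fun p => f p - cau (fun i => 3/4 * r i) f p, ?_⟩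
  · intro z hz
    rw [hDr]
    intro i
    have := hz i
    simp only [Pi.zero_apply, sub_zero] at this
    exact this.trans_lt (by linarith [hr i])
  rw [hD']
  simp only [sub_sub_cancel]
  have hfull := hf
  obtain ⟨hW, ⟨hsm, hhol⟩, -, -⟩ := hf
  have hR : ∀ i, 0 < 3/4 * r i := fun i => by linarith [hr i]
  set R : Fin n → ℝ := fun i => 3/4 * r i with hRdef
  obtain ⟨O, hO⟩ : ∃ O : Set (Cn n), O = {ζ : Cn n | ∀ z ∈ CPol (fun i => 7/6 * (3/4 * r i)),
    (z, ζ) ∈ interior W} := ⟨_, rfl⟩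
  have hOo : IsOpen O := by rw [hO]; exact tube_open isOpen_interior (CPol_compact _)
  have hOX : ∀ w ∈ CPol (fun i => 7/6 * R i), ∀ ζ ∈ O, (w, ζ) ∈ interior W := by
    intro w hw ζ hζ
    rw [hO] at hζ
    exact hζ w hw
  have hC' : CPol R ⊆ CPol (fun i => 7/6 * R i) := CPol_mono fun i => by simp only [hRdef]; linarith [hr i]
  have hDO : OPol (fun i => r i / 2) ⊆ OPol R := fun z hz i =>
    (hz i).trans (by simp only [hRdef]; linarith [hr i])
  have hOC : OPol R ⊆ CPol R := fun z hz i => (hz i).le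
  have hfX : ContDiffOn ℝ (⊤ : ℕ∞) f (interior W) := hsm.mono interior_subset
  have hX' : ∀ w ∈ CPol R, ∀ ζ ∈ O, (w, ζ) ∈ interior W := fun w hw => hOX w (hC' hw)
  have hh : ∀ w ∈ CPol R, ∀ ζ ∈ O, DifferentiableAt ℂ (fun ζ => f (w, ζ)) ζ := by
    intro w hw ζ hζ
    refine (hhol w).differentiableAt ?_
    have hc : Continuous fun ζ : Cn n => ((w, ζ) : Pt n) := by fun_prop
    exact Filter.mem_of_superset ((isOpen_interior.preimage hc).mem_nhds (hX' w hw ζ hζ))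
      (fun η hη => interior_subset (s := W) hη)
  have hu := cau_smooth hR hOo hfX hX'
  have hwedge : IsInfWedge (OPol (fun i => r i / 2) ×ˢ Γ) ((OPol (fun i => r i / 2) ×ˢ O) ∩ (Set.univ ×ˢ Γ)) := by
    refine ⟨fun p hp => ⟨hp.1.1, hp.2.2⟩, ?_⟩
    rintro K ⟨hKc, hKV⟩
    obtain ⟨δ, hδ, d⟩ := slab (wedge_interior ((OPol_open r).prod hΓopen) hW)
      (CPol_compact (fun i => 7/6 * (3/4 * r i))) (hKc.image continuous_snd) (by
        refine Set.prod_mono (fun z hz i => (hz i).trans_lt (by linarith [hr i])) ?_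
        rintro _ ⟨p, hp, rfl⟩
        exact (hKV hp).2)
    refine ⟨δ, hδ, fun p hp t ht => ?_⟩
    have hp' := hKV (subset_closure hp)
    refine ⟨⟨hp'.1, ?_⟩, trivial, hΓcone _ hp'.2 t (hδ.trans ht)⟩
    rw [hO]
    exact fun z hz => d z hz _ ⟨p, subset_closure hp, rfl⟩ t ht
  have hτ : (2/3 : ℝ) < 1 := by norm_num
  have hloc : ∀ V' : Set (Pt n), IsCone V' → ConeRelCpt V' (OPol (fun i => r i / 2) ×ˢ Γ) →
      ∃ W' ⊆ ((OPol (fun i => r i / 2) ×ˢ O) ∩ (Set.univ ×ˢ Γ)), IsInfWedge V' W' ∧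
      (∀ α β : Fin n → ℕ, ∃ h C : ℝ, 0 < h ∧ 0 < C ∧
        ∀ p ∈ W', ‖mixedDeriv α β (fun p => f p - cau R f p) p‖ ≤
          C * Real.exp (-h * eucNorm p.2)) ∧
      ∀ h : ℝ, 0 < h → ∃ C : ℝ, 0 < C ∧
        ∀ p ∈ W', ‖cau R f p‖ ≤ C * Real.exp (h * eucNorm p.2) := by
    intro V' hV'c hV'
    obtain ⟨S, hS, hw, hI, hN⟩ := local_data hr hΓopen hΓcone hfull hO
      (r' := fun i => r i / 2) (fun i => rfl) hV'c hV'
    obtain ⟨h1, h2⟩ := core hR isOpen_interior hOo hS hfX hOX hh hI hN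
    have hV'sub : V' ⊆ OPol (fun i => r i / 2) ×ˢ Γ := by
      obtain ⟨K, ⟨-, hKV⟩, rfl⟩ := hV'
      rintro _ ⟨t, ht, q, hq, rfl⟩
      have := hKV (subset_closure hq)
      exact ⟨this.1, hΓcone _ this.2 t ht⟩
    have hpt : ∀ p ∈ V' ∩ (OPol (fun i => r i / 2) ×ˢ S), ∀ i, ‖p.1 i‖ ≤ 2/3 * R i := by
      intro p hp i
      have := hp.2.1 i
      simp only [hRdef]
      linarith
    refine ⟨_, fun p hp => ⟨⟨hp.2.1, hS hp.2.2⟩, trivial, (hV'sub hp.1).2⟩, hw, ?_, ?_⟩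
    · intro α β
      obtain ⟨h, C, hh, hC, hb⟩ := h1 (nrm α β) (2/3) hτ
      refine ⟨h, C, hh, hC, fun p hp => ?_⟩
      rw [mixed_eq]
      exact hb p (hpt p hp) hp.2.2
    · intro h hh
      obtain ⟨C, hC, hb⟩ := h2 (2/3) hτ h hh
      exact ⟨C, hC, fun p hp => hb p (hpt p hp) hp.2.2⟩
  refine ⟨_, ⟨hwedge, ⟨?_, ?_⟩, ?_⟩, _, hwedge, ?_, ?_⟩
  · refine ContDiffOn.sub (hfX.mono ?_) (hu.mono ?_)
    · exact fun p hp => hX' p.1 (hOC (hDO hp.1.1)) p.2 hp.1.2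
    · exact fun p hp => ⟨hDO hp.1.1, hp.1.2⟩
  · intro z ζ hζ
    have hz := hDO hζ.1.1
    have hc : DifferentiableAt ℂ (fun ζ => cau R f (z, ζ)) ζ :=
      DifferentiableAt.comp ζ (g := cau R f) (f := fun ζ : Cn n => ((z, ζ) : Pt n))
        (cau_holo hR hOo hfX hX' hh ⟨hz, hζ.1.2⟩) (by fun_prop)
    exact ((hh z (hOC hz) ζ hζ.1.2).sub hc).differentiableWithinAt
  · intro V' _ hc hV'
    obtain ⟨W', h1, h2, h3, -⟩ := hloc V' hc hV'
    exact ⟨W', h1, h2, h3⟩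
  · intro p hp
    exact (cau_holo hR hOo hfX hX' hh ⟨hDO hp.1.1, hp.1.2⟩).differentiableWithinAt
  · intro V' _ hc hV'
    obtain ⟨W', h1, h2, -, h3⟩ := hloc V' hc hV'
    exact ⟨W', h1, h2, h3⟩
end
end

section
/- Let n ≥ 1, r ≥ 1, I = {1,…,n}, and let A be an additive commutative group. Suppose P : I^{r+1} × I^{r} → A satisfies: P(u,v) = 0 whenever the tuple u has two equal entries or the tuple v has two equal entries; P changes sign when two adjacent entries of u are interchanged; and P changes sign when two adjacent entries of v are interchanged. Let I^{(k)} denote the set of weakly increasing k-tuples with entries in I. Then Σ_{α ∈ I^{(r)}} Σ_{i=1}^{n} P(α⌢i, α) = Σ_{β ∈ I^{(r+1)}} Σ_{j=1}^{r+1} (−1)^{r+1−j} P(β, β_ǰ), where α⌢i denotes the (r+1)-tuple obtained by appending i as the last entry of α, and β_ǰ denotes the r-tuple obtained by deleting the j-th entry of β. -/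
open scoped Classical

theorem combi_key {n r : ℕ} {A : Type*} [AddCommGroup A]
    (P : (Fin (r + 1) → Fin n) → A)
    (hswap : ∀ (u : Fin (r + 1) → Fin n) (k : ℕ) (hk : k + 1 < r + 1),
      P (u ∘ Equiv.swap (⟨k, Nat.lt_of_succ_lt hk⟩ : Fin (r + 1)) ⟨k + 1, hk⟩) = -P u) :
    ∀ (d : ℕ) (j : Fin (r + 1)) (_ : (j : ℕ) + d = r) (u : Fin (r + 1) → Fin n),
      P (Fin.snoc (u ∘ j.succAbove) (u j)) = ((-1 : ℤ) ^ d) • P u := by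
  intro d
  induction d with
  | zero =>
    intro j hj u
    have : j = Fin.last r := Fin.ext (by simpa using hj)
    subst this
    have h : (Fin.snoc (u ∘ (Fin.last r).succAbove) (u (Fin.last r)) : Fin (r + 1) → Fin n) = u := by
      rw [Fin.succAbove_last]
      exact Fin.snoc_init_self (α := fun _ => Fin n) u
    rw [h]; simp
  | succ d ih =>
    intro j hj u
    have hk : (j : ℕ) + 1 < r + 1 := by omega
    have h := ih ⟨j + 1, hk⟩ (by simp only; omega)
      (u ∘ Equiv.swap (⟨j, Nat.lt_of_succ_lt hk⟩ : Fin (r + 1)) ⟨j + 1, hk⟩)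
    rw [hswap] at h
    have e1 : (u ∘ Equiv.swap (⟨j, Nat.lt_of_succ_lt hk⟩ : Fin (r + 1)) ⟨j + 1, hk⟩) ∘
        (⟨j + 1, hk⟩ : Fin (r + 1)).succAbove = u ∘ j.succAbove := by
      funext x
      simp only [Function.comp]
      congr 1
      simp only [Equiv.swap_apply_def, Fin.succAbove, Fin.lt_def, Fin.ext_iff]
      split_ifs <;> simp_all <;> omega
    rw [e1] at h
    simp only [Function.comp_apply, Equiv.swap_apply_right, Fin.eta] at h
    rw [h, pow_succ]
    simp

theorem combi_range {n r : ℕ} (β : Fin (r + 1) → Fin n) (j : Fin (r + 1)) :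
    Set.range β = insert (β j) (Set.range (β ∘ j.succAbove)) := by
  rw [Set.range_comp, Fin.range_succAbove, ← Set.image_univ, ← Set.image_insert_eq]
  congr 1
  ext x; simp [em]

/-- (Reindexing lemma `combi` of the appendix.) Let `I = {1, …, n}` and
let `P : I^{r+1} × I^r → A` vanish on tuples with repeated entries and change sign under
interchanges of adjacent entries in either argument.  Then
`∑_{α ∈ I^{(r)}} ∑_{i=1}^n P(α⌢i, α)
  = ∑_{β ∈ I^{(r+1)}} ∑_{j=1}^{r+1} (−1)^{r+1−j} P(β, β_ǰ)`,
where `I^{(k)}` is the set of weakly increasing `k`-tuples, `α⌢i` appends `i` at the end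
of `α`, and `β_ǰ` deletes the `j`-th entry of `β`. -/
theorem combi_reindexing {n r : ℕ} (hn : 1 ≤ n) (hr : 1 ≤ r)
    (A : Type*) [AddCommGroup A]
    (P : (Fin (r + 1) → Fin n) → (Fin r → Fin n) → A)
    (hzero : ∀ (u : Fin (r + 1) → Fin n) (v : Fin r → Fin n),
      ((∃ i j, i ≠ j ∧ u i = u j) ∨ (∃ i j, i ≠ j ∧ v i = v j)) → P u v = 0)
    (hswap_u : ∀ (u : Fin (r + 1) → Fin n) (v : Fin r → Fin n)
      (k : ℕ) (hk : k + 1 < r + 1),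
      P (u ∘ Equiv.swap (⟨k, Nat.lt_of_succ_lt hk⟩ : Fin (r + 1)) ⟨k + 1, hk⟩) v
        = -P u v)
    (hswap_v : ∀ (u : Fin (r + 1) → Fin n) (v : Fin r → Fin n)
      (k : ℕ) (hk : k + 1 < r),
      P u (v ∘ Equiv.swap (⟨k, Nat.lt_of_succ_lt hk⟩ : Fin r) ⟨k + 1, hk⟩)
        = -P u v) :
    ∑ α ∈ Finset.univ.filter (fun α : Fin r → Fin n => Monotone α),
      ∑ i : Fin n, P (Fin.snoc α i) α
    = ∑ β ∈ Finset.univ.filter (fun β : Fin (r + 1) → Fin n => Monotone β),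
        ∑ j : Fin (r + 1), ((-1 : ℤ) ^ (r - (j : ℕ))) • P β (β ∘ j.succAbove) := by
  have hu : ∀ u v, P u v ≠ 0 → Function.Injective u := by
    intro u v h a b hab
    by_contra hne
    exact h (hzero u v (Or.inl ⟨a, b, hne, hab⟩))
  have hv : ∀ u v, P u v ≠ 0 → Function.Injective v := by
    intro u v h a b hab
    by_contra hne
    exact h (hzero u v (Or.inr ⟨a, b, hne, hab⟩))
  have key : ∀ (β : Fin (r + 1) → Fin n) (j : Fin (r + 1)) v,
      P (Fin.snoc (β ∘ j.succAbove) (β j)) v = ((-1 : ℤ) ^ (r - (j : ℕ))) • P β v := by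
    intro β j v
    exact combi_key (fun u => P u v) (fun u k hk => hswap_u u v k hk) _ j (by omega) β
  simp_rw [← key]
  rw [← Finset.sum_product', ← Finset.sum_product']
  symm
  have hsm : ∀ (β : Fin (r + 1) → Fin n) (j : Fin (r + 1)) v, Monotone β →
      P (Fin.snoc (β ∘ j.succAbove) (β j)) v ≠ 0 → StrictMono β := by
    intro β j v hm h
    rw [key] at h
    exact hm.strictMono_of_injective (hu β v (fun h0 => h (by rw [h0, smul_zero])))
  refine Finset.sum_bij_ne_zero (fun x _ _ => (x.1 ∘ x.2.succAbove, x.1 x.2)) ?_ ?_ ?_ ?_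
  · rintro ⟨β, j⟩ h _
    simp only [Finset.mem_product, Finset.mem_filter, Finset.mem_univ, true_and, and_true] at h ⊢
    exact h.comp (Fin.strictMono_succAbove j).monotone
  · rintro ⟨β, j⟩ h hne ⟨β', j'⟩ h' hne' he
    simp only [Finset.mem_product, Finset.mem_filter, Finset.mem_univ, true_and, and_true] at h h'
    have s := hsm _ _ _ h hne
    have s' := hsm _ _ _ h' hne'
    simp only [Prod.mk.injEq] at he
    have hr : Set.range β = Set.range β' := by
      rw [combi_range β j, combi_range β' j', he.1, he.2]
    have hb : β = β' := (StrictMono.range_inj s s').1 hr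
    subst hb
    rw [s.injective he.2]
  · rintro ⟨α, i⟩ h hne
    simp only [Finset.mem_product, Finset.mem_filter, Finset.mem_univ, true_and, and_true] at h
    have sα := h.strictMono_of_injective (hv _ _ hne)
    have hinj := hu _ _ hne
    have hi : i ∉ Set.range α := by
      rintro ⟨k, hk⟩
      have : k.castSucc = Fin.last r := hinj (by simpa using hk)
      exact (Fin.castSucc_lt_last k).ne this
    let S : Finset (Fin n) := insert i (Finset.univ.image α)
    have hS : S.card = r + 1 := by
      rw [Finset.card_insert_of_notMem (by simpa using hi),
        Finset.card_image_of_injective _ sα.injective]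
      simp
    let β := S.orderEmbOfFin hS
    have hβ : Set.range β = insert i (Set.range α) := by
      rw [Finset.range_orderEmbOfFin]; simp [S]
    obtain ⟨j, hj⟩ : i ∈ Set.range β := by rw [hβ]; simp
    have sβ : StrictMono β := β.strictMono
    have e : β ∘ j.succAbove = α := by
      refine (StrictMono.range_inj (sβ.comp (Fin.strictMono_succAbove j)) sα).1 ?_
      have h1 := combi_range β j
      rw [hβ, hj] at h1
      have h2 : i ∉ Set.range (β ∘ j.succAbove) := by
        rintro ⟨k, hk⟩
        exact Fin.succAbove_ne j k (sβ.injective (hk.trans hj.symm))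
      rw [← Set.insert_diff_self_of_notMem h2, ← h1, Set.insert_diff_self_of_notMem hi]
    refine ⟨(β, j), ?_, ?_, ?_⟩
    · simpa using sβ.monotone
    · simpa only [e, hj] using hne
    · simp only [e, hj]
  · rintro ⟨β, j⟩ h hne
    rfl
end

section
/- Let K ⊂ ℂ^n be a compact set, B ⊂ ℂ^n a bounded open set, Γ ⊆ ℂ^n∖{0} a cone, and c > 0, and suppose Re⟨z'−z, ζ⟩ ≤ −c·|ζ| for all z ∈ B, z' ∈ K, ζ ∈ Γ. Let ω be a C^∞ function on an open neighborhood of (closure of B)×K in ℂ^n×ℂ^n ≅ ℝ^{4n}. Define F(z,ζ) = ∫_K ω(z,z')·e^{⟨z'−z,ζ⟩} dλ(z'), where λ is Lebesgue measure on ℂ^n ≅ ℝ^{2n}. Then F is C^∞ in z and holomorphic in ζ on B×Γ, and for all multi-indices α,β ∈ ℤ^n_{≥0} there exist constants C > 0 and h > 0 such that |∂^α_z ∂^β_{z̄} F(z,ζ)| ≤ C·e^{−h|ζ|} for all (z,ζ) ∈ B×Γ. -/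
open Complex MeasureTheory

noncomputable section

/-- The bilinear pairing `⟨w, ζ⟩ = ∑ᵢ wᵢ ζᵢ`. -/
def cpair {n : ℕ} (w ζ : Cn n) : ℂ := ∑ i, w i * ζ i

open scoped Topology

section FiberHelpers

lemma fih_hasFDerivAt {𝕜 P G E : Type} [RCLike 𝕜] [NormedAddCommGroup P] [NormedSpace 𝕜 P]
    [ProperSpace P] [NormedAddCommGroup G] [MeasurableSpace G] [BorelSpace G]
    [SecondCountableTopology G]
    [NormedAddCommGroup E] [NormedSpace ℝ E] [NormedSpace 𝕜 E]
    (μ : Measure G) [IsFiniteMeasureOnCompacts μ]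
    (K : Set G) (hK : IsCompact K) (S : Set P) (hS : IsOpen S)
    (Φ : P → G → E) (Φ' : P → G → P →L[𝕜] E)
    (h0 : ContinuousOn (fun q : P × G => Φ q.1 q.2) (S ×ˢ K))
    (h1 : ContinuousOn (fun q : P × G => Φ' q.1 q.2) (S ×ˢ K))
    (hd : ∀ p ∈ S, ∀ t ∈ K, HasFDerivAt (fun p => Φ p t) (Φ' p t) p)
    (p : P) (hp : p ∈ S) :
    HasFDerivAt (fun p => ∫ t in K, Φ p t ∂μ) (∫ t in K, Φ' p t ∂μ) p := by
  obtain ⟨r, hr, hrS⟩ := Metric.nhds_basis_closedBall.mem_iff.1 (hS.mem_nhds hp)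
  have hc : IsCompact (Metric.closedBall p r ×ˢ K) := (isCompact_closedBall p r).prod hK
  obtain ⟨M, hM⟩ := hc.exists_bound_of_continuousOn
    (h1.mono (Set.prod_mono hrS subset_rfl))
  have s0 : ∀ x ∈ S, ContinuousOn (Φ x) K := fun x hx =>
    h0.comp (f := fun t => (x, t)) (by fun_prop) (fun t ht => ⟨hx, ht⟩)
  have s1 : ∀ x ∈ S, ContinuousOn (Φ' x) K := fun x hx =>
    h1.comp (f := fun t => (x, t)) (by fun_prop) (fun t ht => ⟨hx, ht⟩)
  refine hasFDerivAt_integral_of_dominated_of_fderiv_le (bound := fun _ => M)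
    (Metric.closedBall_mem_nhds p hr) ?_ ?_ ?_ ?_ ?_ ?_
  · filter_upwards [hS.mem_nhds hp] with x hx
    exact (s0 x hx).aestronglyMeasurable hK.measurableSet
  · exact (s0 p hp).integrableOn_compact hK
  · exact (s1 p hp).aestronglyMeasurable hK.measurableSet
  · filter_upwards [ae_restrict_mem hK.measurableSet] with t ht x hx
    exact hM (x, t) ⟨hx, ht⟩
  · exact integrableOn_const hK.measure_ne_top
  · filter_upwards [ae_restrict_mem hK.measurableSet] with t ht x hx
    exact hd x (hrS hx) t ht

lemma fih_real {P G E : Type} [NormedAddCommGroup P] [NormedSpace ℝ P]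
    [ProperSpace P] [NormedAddCommGroup G] [NormedSpace ℝ G] [MeasurableSpace G] [BorelSpace G]
    [SecondCountableTopology G]
    [NormedAddCommGroup E] [NormedSpace ℝ E]
    (μ : Measure G) [IsFiniteMeasureOnCompacts μ]
    (K : Set G) (hK : IsCompact K) (S : Set P) (hS : IsOpen S)
    (Ω : Set (P × G)) (hΩ : IsOpen Ω) (hSK : S ×ˢ K ⊆ Ω)
    (Φ : P × G → E) (hΦ : ContDiffOn ℝ (⊤ : ℕ∞) Φ Ω)
    (p : P) (hp : p ∈ S) :
    HasFDerivAt (fun p => ∫ t in K, Φ (p, t) ∂μ)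
      (∫ t in K, (fderiv ℝ Φ (p, t)).comp (ContinuousLinearMap.inl ℝ P G) ∂μ) p := by
  have hf := ((contDiffOn_infty_iff_fderiv_of_isOpen hΩ).1 hΦ)
  refine fih_hasFDerivAt μ K hK S hS (fun p t => Φ (p, t))
    (fun p t => (fderiv ℝ Φ (p, t)).comp (ContinuousLinearMap.inl ℝ P G))
    (hΦ.continuousOn.mono hSK) ?_ ?_ p hp
  · exact (hf.2.continuousOn.mono hSK).clm_comp continuousOn_const
  · intro x hx t ht
    have h := (hf.1.differentiableAt (hΩ.mem_nhds (hSK (Set.mk_mem_prod hx ht)))).hasFDerivAt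
    exact HasFDerivAt.comp (g := Φ) x h (hasFDerivAt_prodMk_left x t)

lemma fih_contDiff {P G : Type} [NormedAddCommGroup P] [NormedSpace ℝ P]
    [ProperSpace P] [NormedAddCommGroup G] [NormedSpace ℝ G] [MeasurableSpace G] [BorelSpace G]
    [SecondCountableTopology G]
    (μ : Measure G) [IsFiniteMeasureOnCompacts μ]
    (K : Set G) (hK : IsCompact K) (S : Set P) (hS : IsOpen S)
    (Ω : Set (P × G)) (hΩ : IsOpen Ω) (hSK : S ×ˢ K ⊆ Ω) (N : ℕ) :
    ∀ (E : Type) [NormedAddCommGroup E] [NormedSpace ℝ E]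
    (Φ : P × G → E) (_ : ContDiffOn ℝ (⊤ : ℕ∞) Φ Ω),
    ContDiffOn ℝ N (fun p => ∫ t in K, Φ (p, t) ∂μ) S := by
  induction N with
  | zero =>
    intro E _ _ Φ hΦ
    rw [Nat.cast_zero, contDiffOn_zero]
    intro p hp
    exact (fih_real μ K hK S hS Ω hΩ hSK Φ hΦ p hp).continuousAt.continuousWithinAt
  | succ N ih =>
    intro E _ _ Φ hΦ
    rw [Nat.cast_succ, contDiffOn_succ_iff_fderiv_of_isOpen hS]
    have key := fih_real μ K hK S hS Ω hΩ hSK Φ hΦ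
    refine ⟨fun p hp => (key p hp).differentiableAt.differentiableWithinAt, by simp, ?_⟩
    refine (ih _ (fun q => (fderiv ℝ Φ q).comp (ContinuousLinearMap.inl ℝ P G)) ?_).congr
      (fun p hp => (key p hp).fderiv)
    exact ((contDiffOn_infty_iff_fderiv_of_isOpen hΩ).1 hΦ).2.clm_comp contDiffOn_const

variable {n : ℕ}

/-- the fiber integral -/
def fihG (K : Set (Cn n)) (ω : Pt n → ℂ) : Pt n → ℂ := fun x =>
  ∫ z' in K, ω (x.1, z') * Complex.exp (cpair (z' - x.1) x.2)

/-- the integrand -/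
def fihPhi (ω : Pt n → ℂ) : Pt n × Cn n → ℂ := fun q =>
  ω (q.1.1, q.2) * Complex.exp (cpair (q.2 - q.1.1) q.1.2)

/-- the domain -/
def fihOm (O : Set (Pt n)) : Set (Pt n × Cn n) := {q | (q.1.1, q.2) ∈ O}

lemma fihOm_open {O : Set (Pt n)} (hO : IsOpen O) : IsOpen (fihOm O) :=
  hO.preimage (by fun_prop : Continuous fun q : Pt n × Cn n => (q.1.1, q.2))

lemma fihPhi_contDiff {O : Set (Pt n)} {ω : Pt n → ℂ} (hω : ContDiffOn ℝ (⊤ : ℕ∞) ω O) :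
    ContDiffOn ℝ (⊤ : ℕ∞) (fihPhi ω) (fihOm O) := by
  unfold fihPhi
  refine ContDiffOn.mul (hω.comp (t := O) (f := fun q : Pt n × Cn n => (q.1.1, q.2))
    (by fun_prop) (fun q hq => hq)) ?_
  apply ContDiff.contDiffOn
  apply ContDiff.cexp
  unfold cpair
  fun_prop

lemma fih_sub {K B : Set (Cn n)} {O : Set (Pt n)} (h : B ×ˢ K ⊆ O) :
    (B ×ˢ (Set.univ : Set (Cn n))) ×ˢ K ⊆ fihOm O := fun _ hq => h ⟨hq.1.1, hq.2⟩

lemma fihPhi_fderiv {O : Set (Pt n)} (hO : IsOpen O) {ω : Pt n → ℂ} (hω : ContDiffOn ℝ (⊤ : ℕ∞) ω O)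
    (v : Cn n) (q : Pt n × Cn n) (hq : (q.1.1, q.2) ∈ O) :
    fderiv ℝ (fihPhi ω) q ((v, 0), 0) =
      fderiv ℝ ω (q.1.1, q.2) (v, 0) * Complex.exp (cpair (q.2 - q.1.1) q.1.2)
      - cpair v q.1.2 * (ω (q.1.1, q.2) * Complex.exp (cpair (q.2 - q.1.1) q.1.2)) := by
  have hwd : HasFDerivAt ω (fderiv ℝ ω (q.1.1, q.2)) (q.1.1, q.2) :=
    ((hω.differentiableOn (by simp)).differentiableAt (hO.mem_nhds hq)).hasFDerivAt
  have hΦ := ((fihPhi_contDiff hω).differentiableOn (by simp)).differentiableAt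
    ((fihOm_open hO).mem_nhds hq)
  -- derivative along a line
  have hline : HasDerivAt (fun s : ℝ => q + s • (((v, 0), 0) : Pt n × Cn n)) ((v, 0), 0) 0 := by
    simpa using ((hasDerivAt_id (0:ℝ)).smul_const (((v, 0), 0) : Pt n × Cn n)).const_add q
  have h1 : HasDerivAt (fun s : ℝ => fihPhi ω (q + s • (((v, 0), 0) : Pt n × Cn n)))
      (fderiv ℝ (fihPhi ω) q ((v, 0), 0)) 0 := by
    refine HasFDerivAt.comp_hasDerivAt (0:ℝ) (l := fihPhi ω) ?_ hline
    simpa using hΦ.hasFDerivAt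
  have hline2 : HasDerivAt (fun s : ℝ => ((q.1.1, q.2) : Pt n) + s • ((v, 0) : Pt n)) (v, 0) 0 := by
    simpa using ((hasDerivAt_id (0:ℝ)).smul_const ((v, 0) : Pt n)).const_add ((q.1.1, q.2) : Pt n)
  have h2 : HasDerivAt (fun s : ℝ => ω (((q.1.1, q.2) : Pt n) + s • ((v, 0) : Pt n)))
      (fderiv ℝ ω (q.1.1, q.2) (v, 0)) 0 := by
    refine HasFDerivAt.comp_hasDerivAt (0:ℝ) (l := ω) ?_ hline2
    simpa using hwd
  have h3 : HasDerivAt (fun s : ℝ => Complex.exp (cpair (q.2 - q.1.1) q.1.2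
      - (s : ℂ) * cpair v q.1.2)) (Complex.exp (cpair (q.2 - q.1.1) q.1.2) * (- cpair v q.1.2)) 0 := by
    have := (((Complex.ofRealCLM.hasDerivAt (x := (0:ℝ))).mul_const (cpair v q.1.2)).const_sub
      (cpair (q.2 - q.1.1) q.1.2)).cexp
    simpa using this
  have h4 := h2.mul h3
  have heq : (fun s : ℝ => fihPhi ω (q + s • (((v, 0), 0) : Pt n × Cn n))) =
      (fun s : ℝ => ω (((q.1.1, q.2) : Pt n) + s • ((v, 0) : Pt n))) *
      (fun s : ℝ => Complex.exp (cpair (q.2 - q.1.1) q.1.2 - (s : ℂ) * cpair v q.1.2)) := by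
    funext s
    simp only [fihPhi, Pi.mul_apply]
    have hex : cpair ((q + s • (((v, 0), 0) : Pt n × Cn n)).2 -
        (q + s • (((v, 0), 0) : Pt n × Cn n)).1.1) (q + s • (((v, 0), 0) : Pt n × Cn n)).1.2 =
        cpair (q.2 - q.1.1) q.1.2 - (s : ℂ) * cpair v q.1.2 := by
      simp only [cpair, Finset.mul_sum, ← Finset.sum_sub_distrib]
      refine Finset.sum_congr rfl fun i _ => ?_
      simp
      ring
    rw [hex]
    simp
  rw [heq] at h1
  rw [h1.unique h4]
  simp
  ring

lemma fih_dir_contDiff {O : Set (Pt n)} (hO : IsOpen O) {ω : Pt n → ℂ} (hω : ContDiffOn ℝ (⊤ : ℕ∞) ω O)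
    (v : Cn n) : ContDiffOn ℝ (⊤ : ℕ∞) (fun p => fderiv ℝ ω p (v, 0)) O :=
  ((contDiffOn_infty_iff_fderiv_of_isOpen hO).1 hω).2.clm_apply contDiffOn_const

lemma fih_intOn {K B : Set (Cn n)} (hK : IsCompact K) {O : Set (Pt n)} (hBK : B ×ˢ K ⊆ O)
    {ω : Pt n → ℂ} (hω : ContinuousOn ω O) (p : Pt n) (hp : p.1 ∈ B) :
    IntegrableOn (fun z' => ω (p.1, z') * Complex.exp (cpair (z' - p.1) p.2)) K := by
  apply ContinuousOn.integrableOn_compact hK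
  refine ContinuousOn.mul (hω.comp (f := fun z' => (p.1, z')) (by fun_prop)
    (fun t ht => hBK ⟨hp, ht⟩)) ?_
  unfold cpair
  fun_prop

lemma fihG_fderiv {K B : Set (Cn n)} (hK : IsCompact K) (hB : IsOpen B) {O : Set (Pt n)}
    (hO : IsOpen O) (hBK : B ×ˢ K ⊆ O) {ω : Pt n → ℂ} (hω : ContDiffOn ℝ (⊤ : ℕ∞) ω O)
    (v : Cn n) (p : Pt n) (hp : p.1 ∈ B) :
    DifferentiableAt ℝ (fihG K ω) p ∧ fderiv ℝ (fihG K ω) p (v, 0) =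
      fihG K (fun p => fderiv ℝ ω p (v, 0)) p - cpair v p.2 * fihG K ω p := by
  have key := fih_real volume K hK (B ×ˢ (Set.univ : Set (Cn n))) (hB.prod isOpen_univ)
    (fihOm O) (fihOm_open hO) (fih_sub hBK) (fihPhi ω) (fihPhi_contDiff hω) p ⟨hp, trivial⟩
  change HasFDerivAt (fihG K ω) _ p at key
  refine ⟨key.differentiableAt, ?_⟩
  rw [key.fderiv]
  have hint : IntegrableOn (fun t => (fderiv ℝ (fihPhi ω) (p, t)).comp
      (ContinuousLinearMap.inl ℝ (Pt n) (Cn n))) K := by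
    apply ContinuousOn.integrableOn_compact hK
    refine ContinuousOn.clm_comp ?_ continuousOn_const
    exact ((contDiffOn_infty_iff_fderiv_of_isOpen (fihOm_open hO)).1
      (fihPhi_contDiff hω)).2.continuousOn.comp (f := fun t => (p, t)) (by fun_prop)
      (fun t ht => hBK ⟨hp, ht⟩)
  rw [ContinuousLinearMap.integral_apply hint]
  unfold fihG
  rw [← integral_const_mul, ← integral_sub]
  · refine setIntegral_congr_fun hK.measurableSet fun t ht => ?_
    exact fihPhi_fderiv hO hω v (p, t) (hBK ⟨hp, ht⟩)
  · exact fih_intOn hK hBK (fih_dir_contDiff hO hω v).continuousOn p hp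
  · exact (fih_intOn hK hBK hω.continuousOn p hp).const_mul _

/-- The class of functions generated by fiber integrals. -/
inductive FihNice (K B : Set (Cn n)) (O : Set (Pt n)) : (Pt n → ℂ) → Prop
  | base (ω : Pt n → ℂ) (hω : ContDiffOn ℝ (⊤ : ℕ∞) ω O) : FihNice K B O (fihG K ω)
  | mul (v : Cn n) (f : Pt n → ℂ) (hf : FihNice K B O f) :
      FihNice K B O (fun p => cpair v p.2 * f p)
  | lin (a b : ℂ) (f g : Pt n → ℂ) (hf : FihNice K B O f) (hg : FihNice K B O g) :
      FihNice K B O (fun p => a * f p + b * g p)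
  | congr (f g : Pt n → ℂ) (hf : FihNice K B O f) (h : ∀ p : Pt n, p.1 ∈ B → g p = f p) :
      FihNice K B O g

lemma FihNice.fderiv {K B : Set (Cn n)} (hK : IsCompact K) (hB : IsOpen B) {O : Set (Pt n)}
    (hO : IsOpen O) (hBK : B ×ˢ K ⊆ O) (v : Cn n) {f : Pt n → ℂ} (hf : FihNice K B O f) :
    (∀ p : Pt n, p.1 ∈ B → DifferentiableAt ℝ f p) ∧
      FihNice K B O (fun p => fderiv ℝ f p (v, 0)) := by
  induction hf with
  | base ω hω =>
    refine ⟨fun p hp => (fihG_fderiv hK hB hO hBK hω v p hp).1, ?_⟩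
    refine .congr _ _ (.lin 1 (-1) _ _ (.base _ (fih_dir_contDiff hO hω v))
      (.mul v _ (.base ω hω))) fun p hp => ?_
    rw [(fihG_fderiv hK hB hO hBK hω v p hp).2]
    ring
  | mul w f hf ih =>
    have hl : ∀ p : Pt n, DifferentiableAt ℝ (fun p : Pt n => cpair w p.2) p := by
      intro p
      unfold cpair
      fun_prop
    refine ⟨fun p hp => (hl p).mul (ih.1 p hp), ?_⟩
    refine .congr _ _ (.mul w _ ih.2) fun p hp => ?_
    have hz : _root_.fderiv ℝ (fun p : Pt n => cpair w p.2) p (v, 0) = 0 := by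
      have hline : HasDerivAt (fun s : ℝ => p + s • ((v, 0) : Pt n)) (v, 0) 0 := by
        simpa using ((hasDerivAt_id (0:ℝ)).smul_const ((v, 0) : Pt n)).const_add p
      have h1 : HasDerivAt (fun s : ℝ => cpair w (p + s • ((v, 0) : Pt n)).2)
          (_root_.fderiv ℝ (fun p : Pt n => cpair w p.2) p (v, 0)) 0 := by
        refine HasFDerivAt.comp_hasDerivAt (0:ℝ) (l := fun p : Pt n => cpair w p.2) ?_ hline
        simpa using (hl p).hasFDerivAt
      have h2 : HasDerivAt (fun s : ℝ => cpair w (p + s • ((v, 0) : Pt n)).2) 0 0 := by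
        simpa using hasDerivAt_const (0:ℝ) (cpair w p.2)
      exact h1.unique h2
    rw [fderiv_fun_mul (hl p) (ih.1 p hp)]
    simp [hz]
  | lin a b f g hf hg ihf ihg =>
    refine ⟨fun p hp => ((ihf.1 p hp).const_mul a).add ((ihg.1 p hp).const_mul b), ?_⟩
    refine .congr _ _ (.lin a b _ _ ihf.2 ihg.2) fun p hp => ?_
    rw [fderiv_fun_add ((ihf.1 p hp).const_mul a) ((ihg.1 p hp).const_mul b),
      fderiv_const_mul (ihf.1 p hp), fderiv_const_mul (ihg.1 p hp)]
    simp
  | congr f g hf h ih =>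
    have he : ∀ p : Pt n, p.1 ∈ B → g =ᶠ[𝓝 p] f := fun p hp => by
      filter_upwards [(hB.preimage continuous_fst).mem_nhds (show p ∈ Prod.fst ⁻¹' B from hp)]
        with x hx using h x hx
    refine ⟨fun p hp => (he p hp).differentiableAt_iff.2 (ih.1 p hp), ?_⟩
    refine .congr _ _ ih.2 fun p hp => ?_
    rw [(he p hp).fderiv_eq]

lemma FihNice.dz {K B : Set (Cn n)} (hK : IsCompact K) (hB : IsOpen B) {O : Set (Pt n)}
    (hO : IsOpen O) (hBK : B ×ˢ K ⊆ O) (i : Fin n) {f : Pt n → ℂ} (hf : FihNice K B O f) :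
    FihNice K B O (dz i f) := by
  refine .congr _ _ (.lin (1/2) (-(1/2) * I) _ _
    (hf.fderiv hK hB hO hBK (Pi.single i 1)).2 (hf.fderiv hK hB hO hBK (Pi.single i I)).2)
    fun p hp => ?_
  simp only [_root_.dz]
  ring

lemma FihNice.dzbar {K B : Set (Cn n)} (hK : IsCompact K) (hB : IsOpen B) {O : Set (Pt n)}
    (hO : IsOpen O) (hBK : B ×ˢ K ⊆ O) (i : Fin n) {f : Pt n → ℂ} (hf : FihNice K B O f) :
    FihNice K B O (dzbar i f) := by
  refine .congr _ _ (.lin (1/2) ((1/2) * I) _ _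
    (hf.fderiv hK hB hO hBK (Pi.single i 1)).2 (hf.fderiv hK hB hO hBK (Pi.single i I)).2)
    fun p hp => ?_
  simp only [_root_.dzbar]
  ring

lemma fih_iter {P : (Pt n → ℂ) → Prop} {d : (Pt n → ℂ) → (Pt n → ℂ)}
    (h : ∀ f, P f → P (d f)) (k : ℕ) : ∀ f, P f → P (d^[k] f) := by
  induction k with
  | zero => intro f hf; exact hf
  | succ k ih => intro f hf; exact ih _ (h f hf)

lemma fih_foldr {P : (Pt n → ℂ) → Prop} (l : List ((Pt n → ℂ) → (Pt n → ℂ)))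
    (h : ∀ d ∈ l, ∀ f, P f → P (d f)) (f : Pt n → ℂ) (hf : P f) :
    P (l.foldr (fun d g => d g) f) := by
  induction l with
  | nil => exact hf
  | cons d l ih =>
    exact h d (by simp) _ (ih fun e he => h e (by simp [he]))

lemma FihNice.mixed {K B : Set (Cn n)} (hK : IsCompact K) (hB : IsOpen B) {O : Set (Pt n)}
    (hO : IsOpen O) (hBK : B ×ˢ K ⊆ O) (α β : Fin n → ℕ) {f : Pt n → ℂ}
    (hf : FihNice K B O f) : FihNice K B O (mixedDeriv α β f) := by
  unfold mixedDeriv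
  refine fih_foldr _ ?_ f hf
  intro d hd
  rw [List.mem_append, List.mem_ofFn, List.mem_ofFn] at hd
  rcases hd with ⟨i, rfl⟩ | ⟨i, rfl⟩
  · exact fih_iter (fun f hf => hf.dz hK hB hO hBK i) _
  · exact fih_iter (fun f hf => hf.dzbar hK hB hO hBK i) _

lemma fih_coord_le (ζ : Cn n) (i : Fin n) : ‖ζ i‖ ≤ eucNorm ζ := by
  unfold eucNorm
  apply Real.le_sqrt_of_sq_le
  rw [← Complex.normSq_eq_norm_sq]
  exact Finset.single_le_sum (f := fun i => Complex.normSq (ζ i))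
    (fun j _ => Complex.normSq_nonneg _) (Finset.mem_univ i)

lemma fih_cpair_le (v ζ : Cn n) : ‖cpair v ζ‖ ≤ (∑ i, ‖v i‖) * eucNorm ζ := by
  unfold cpair
  rw [Finset.sum_mul]
  refine (norm_sum_le _ _).trans (Finset.sum_le_sum fun i _ => ?_)
  rw [norm_mul]
  exact mul_le_mul_of_nonneg_left (fih_coord_le ζ i) (norm_nonneg _)

lemma FihNice.bound {K B Γ : Set (Cn n)} (hK : IsCompact K)
    (hBb : Bornology.IsBounded B) {O : Set (Pt n)}
    (hBK : closure B ×ˢ K ⊆ O) (c : ℝ) (hc : 0 < c)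
    (hdecay : ∀ z ∈ B, ∀ z' ∈ K, ∀ ζ ∈ Γ, (cpair (z' - z) ζ).re ≤ -c * eucNorm ζ)
    {f : Pt n → ℂ} (hf : FihNice K B O f) :
    ∃ C h : ℝ, 0 < C ∧ 0 < h ∧
      ∀ z ∈ B, ∀ ζ ∈ Γ, ‖f (z, ζ)‖ ≤ C * Real.exp (-h * eucNorm ζ) := by
  have en : ∀ ζ : Cn n, 0 ≤ eucNorm ζ := fun ζ => Real.sqrt_nonneg _
  induction hf with
  | base ω hω =>
    have hcomp : IsCompact (closure B ×ˢ K) := hBb.isCompact_closure.prod hK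
    obtain ⟨M, hM⟩ := hcomp.exists_bound_of_continuousOn (hω.continuousOn.mono hBK)
    refine ⟨(|M| + 1) * (volume.real K + 1), c, by positivity, hc, fun z hz ζ hζ => ?_⟩
    have hb : ∀ t ∈ K, ‖ω (z, t) * Complex.exp (cpair (t - z) ζ)‖ ≤
        (|M| + 1) * Real.exp (-c * eucNorm ζ) := by
      intro t ht
      rw [norm_mul, Complex.norm_exp]
      refine mul_le_mul ?_ (Real.exp_le_exp.2 (hdecay z hz t ht ζ hζ)) (by positivity)
        (by positivity)
      have := hM (z, t) ⟨subset_closure hz, ht⟩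
      linarith [le_abs_self M]
    have := norm_setIntegral_le_of_norm_le_const (μ := volume) hK.measure_lt_top hb
    refine this.trans ?_
    have : 0 ≤ (|M| + 1) * Real.exp (-c * eucNorm ζ) := by positivity
    nlinarith
  | mul v f hf ih =>
    obtain ⟨C, h, hC, hh, H⟩ := ih
    have hs : 0 ≤ ∑ i, ‖v i‖ := Finset.sum_nonneg fun i _ => norm_nonneg _
    refine ⟨((∑ i, ‖v i‖) + 1) * (2 / h) * C, h / 2, by positivity, by positivity,
      fun z hz ζ hζ => ?_⟩
    have h1 : eucNorm ζ ≤ (2 / h) * Real.exp (h / 2 * eucNorm ζ) := by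
      have := Real.add_one_le_exp (h / 2 * eucNorm ζ)
      calc eucNorm ζ = (2 / h) * (h / 2 * eucNorm ζ) := by field_simp
        _ ≤ _ := by gcongr; linarith
    rw [norm_mul]
    calc ‖cpair v ζ‖ * ‖f (z, ζ)‖
        ≤ (((∑ i, ‖v i‖) + 1) * ((2 / h) * Real.exp (h / 2 * eucNorm ζ))) *
          (C * Real.exp (-h * eucNorm ζ)) := by
          refine mul_le_mul ?_ (H z hz ζ hζ) (norm_nonneg _) (by positivity)
          refine (fih_cpair_le v ζ).trans ?_
          exact mul_le_mul (by linarith) h1 (en ζ) (by positivity)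
      _ = ((∑ i, ‖v i‖) + 1) * (2 / h) * C *
          (Real.exp (h / 2 * eucNorm ζ) * Real.exp (-h * eucNorm ζ)) := by ring
      _ = _ := by
          rw [← Real.exp_add]
          congr 2
          ring
  | lin a b f g hf hg ihf ihg =>
    obtain ⟨C, h, hC, hh, H⟩ := ihf
    obtain ⟨C', h', hC', hh', H'⟩ := ihg
    refine ⟨(‖a‖ + 1) * C + (‖b‖ + 1) * C', min h h', by positivity, lt_min hh hh',
      fun z hz ζ hζ => ?_⟩
    have e1 : Real.exp (-h * eucNorm ζ) ≤ Real.exp (-(min h h') * eucNorm ζ) := by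
      apply Real.exp_le_exp.2
      have := mul_le_mul_of_nonneg_right (min_le_left h h') (en ζ)
      linarith
    have e2 : Real.exp (-h' * eucNorm ζ) ≤ Real.exp (-(min h h') * eucNorm ζ) := by
      apply Real.exp_le_exp.2
      have := mul_le_mul_of_nonneg_right (min_le_right h h') (en ζ)
      linarith
    calc ‖a * f (z, ζ) + b * g (z, ζ)‖ ≤ ‖a‖ * ‖f (z, ζ)‖ + ‖b‖ * ‖g (z, ζ)‖ := by
          rw [← norm_mul, ← norm_mul]; exact norm_add_le _ _
      _ ≤ (‖a‖ + 1) * (C * Real.exp (-(min h h') * eucNorm ζ)) +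
          (‖b‖ + 1) * (C' * Real.exp (-(min h h') * eucNorm ζ)) := by
          gcongr
          · linarith
          · exact (H z hz ζ hζ).trans (by gcongr)
          · linarith
          · exact (H' z hz ζ hζ).trans (by gcongr)
      _ = _ := by ring
  | congr f g hf h ih =>
    obtain ⟨C, h', hC, hh, H⟩ := ih
    exact ⟨C, h', hC, hh, fun z hz ζ hζ => by rw [h (z, ζ) hz]; exact H z hz ζ hζ⟩

lemma fih_holo {K B : Set (Cn n)} (hK : IsCompact K) {O : Set (Pt n)}
    (hBK : B ×ˢ K ⊆ O) {ω : Pt n → ℂ} (hω : ContinuousOn ω O) (z : Cn n) (hz : z ∈ B) :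
    Differentiable ℂ (fun ζ => fihG K ω (z, ζ)) := by
  intro ζ
  have hw : ContinuousOn (fun t => ω (z, t)) K :=
    hω.comp (f := fun t => (z, t)) (by fun_prop) (fun t ht => hBK ⟨hz, ht⟩)
  have hw2 : ContinuousOn (fun q : Cn n × Cn n => ω (z, q.2)) (Set.univ ×ˢ K) :=
    hw.comp (f := fun q : Cn n × Cn n => q.2) (by fun_prop) (fun q hq => hq.2)
  refine (fih_hasFDerivAt (𝕜 := ℂ) volume K hK Set.univ isOpen_univ
    (fun ζ t => ω (z, t) * Complex.exp (cpair (t - z) ζ))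
    (fun ζ t => (ω (z, t) * Complex.exp (cpair (t - z) ζ)) •
      ∑ i, (t i - z i) • (ContinuousLinearMap.proj i : Cn n →L[ℂ] ℂ)) ?_ ?_ ?_ ζ
      trivial).differentiableAt
  · refine hw2.mul ?_
    unfold cpair
    fun_prop
  · refine (hw2.mul ?_).smul ?_
    · unfold cpair
      fun_prop
    · fun_prop
  · intro x _ t _
    have h1 : HasFDerivAt (fun ζ : Cn n => cpair (t - z) ζ)
        (∑ i, (t i - z i) • (ContinuousLinearMap.proj i : Cn n →L[ℂ] ℂ)) x := by
      have he : (fun ζ : Cn n => cpair (t - z) ζ) =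
          ⇑(∑ i, (t i - z i) • (ContinuousLinearMap.proj i : Cn n →L[ℂ] ℂ)) := by
        funext y
        simp [cpair]
      rw [he]
      exact ContinuousLinearMap.hasFDerivAt _
    have h2 := h1.cexp.const_mul (ω (z, t))
    rwa [smul_smul] at h2

end FiberHelpers

/-- (Exponential decay of the fiber integrals of the symbol map.)
Suppose `Re⟨z' − z, ζ⟩ ≤ −c|ζ|` for `z ∈ B`, `z' ∈ K`, `ζ ∈ Γ` and `ω` is `C^∞` on a
neighborhood of `closure B × K`.  Then `F(z, ζ) = ∫_K ω(z, z') e^{⟨z'−z, ζ⟩} dλ(z')` is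
`C^∞` in `z`, holomorphic in `ζ` on `B × Γ`, and all its mixed `(z, z̄)`-derivatives
decay exponentially in `ζ` on `B × Γ`. -/
theorem fiber_integral_decay {n : ℕ}
    (K : Set (Cn n)) (hK : IsCompact K)
    (B : Set (Cn n)) (hBopen : IsOpen B) (hBbdd : Bornology.IsBounded B)
    (Γ : Set (Cn n)) (hΓ0 : (0 : Cn n) ∉ Γ)
    (hΓcone : ∀ ζ ∈ Γ, ∀ t : ℝ, 0 < t → t • ζ ∈ Γ)
    (c : ℝ) (hc : 0 < c)
    (hdecay : ∀ z ∈ B, ∀ z' ∈ K, ∀ ζ ∈ Γ, (cpair (z' - z) ζ).re ≤ -c * eucNorm ζ)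
    (ω : Pt n → ℂ) (O : Set (Pt n)) (hOopen : IsOpen O)
    (hOsub : (closure B) ×ˢ K ⊆ O) (hω : ContDiffOn ℝ (⊤ : ℕ∞) ω O)
    (F : Pt n → ℂ)
    (hF : ∀ x : Pt n,
      F x = ∫ z' in K, ω (x.1, z') * Complex.exp (cpair (z' - x.1) x.2)) :
    ContDiffOn ℝ (⊤ : ℕ∞) F (B ×ˢ Γ) ∧
    (∀ z ∈ B, DifferentiableOn ℂ (fun ζ => F (z, ζ)) Γ) ∧
    (∀ α β : Fin n → ℕ, ∃ C h : ℝ, 0 < C ∧ 0 < h ∧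
      ∀ z ∈ B, ∀ ζ ∈ Γ,
        ‖mixedDeriv α β F (z, ζ)‖ ≤ C * Real.exp (-h * eucNorm ζ)) := by
  have hBK : B ×ˢ K ⊆ O := (Set.prod_mono subset_closure subset_rfl).trans hOsub
  have hFG : F = fihG K ω := funext hF
  subst hFG
  refine ⟨?_, fun z hz => (fih_holo hK hBK hω.continuousOn z hz).differentiableOn, ?_⟩
  · refine ContDiffOn.mono ?_ (Set.prod_mono subset_rfl (Set.subset_univ Γ))
    refine contDiffOn_infty.2 fun N => ?_
    exact fih_contDiff volume K hK (B ×ˢ (Set.univ : Set (Cn n))) (hBopen.prod isOpen_univ)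
      (fihOm O) (fihOm_open hOopen) (fih_sub hBK) N ℂ (fihPhi ω) (fihPhi_contDiff hω)
  · intro α β
    exact ((FihNice.base ω hω).mixed hK hBopen hOopen hBK α β).bound hK hBbdd hOsub c hc hdecay
end
end

section
/- Let K ⊂ ℂ^n be a compact set, B ⊂ ℂ^n a bounded open set, and Γ ⊆ ℂ^n∖{0} a cone. Set M = sup{ Re⟨z'−z, ζ⟩/|ζ| : z ∈ B, z' ∈ K, ζ ∈ Γ } (finite, since M ≤ sup_{z∈B, z'∈K} |z'−z|). Let ω be a C^∞ function on an open neighborhood of (closure of B)×K in ℂ^n×ℂ^n ≅ ℝ^{4n}, and define F(z,ζ) = ∫_K ω(z,z')·e^{⟨z'−z,ζ⟩} dλ(z'), where λ is Lebesgue measure on ℂ^n ≅ ℝ^{2n}. Then for all multi-indices α,β ∈ ℤ^n_{≥0} and every h > 0 there exists C > 0 such that |∂^α_z ∂^β_{z̄} F(z,ζ)| ≤ C·e^{(M+h)|ζ|} for all (z,ζ) ∈ B×Γ. -/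
open Complex MeasureTheory

noncomputable section

lemma fg_cpair_bound {n : ℕ} (w ζ : Cn n) : ‖cpair w ζ‖ ≤ (∑ i, ‖w i‖) * eucNorm ζ := by
  unfold cpair
  refine (norm_sum_le _ _).trans ?_
  rw [Finset.sum_mul]
  refine Finset.sum_le_sum fun i _ => ?_
  rw [norm_mul]
  refine mul_le_mul_of_nonneg_left ?_ (norm_nonneg _)
  unfold eucNorm
  refine Real.le_sqrt_of_sq_le ?_
  rw [← Complex.normSq_eq_norm_sq]
  exact Finset.single_le_sum (f := fun i => Complex.normSq (ζ i))
    (fun j _ => Complex.normSq_nonneg _) (Finset.mem_univ i)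

lemma fg_eucNorm_pos {n : ℕ} (ζ : Cn n) (h : ζ ≠ 0) : 0 < eucNorm ζ := by
  obtain ⟨i, hi⟩ := Function.ne_iff.mp h
  unfold eucNorm
  refine Real.sqrt_pos.mpr (Finset.sum_pos' (fun j _ => Complex.normSq_nonneg _) ⟨i, Finset.mem_univ i, ?_⟩)
  exact Complex.normSq_pos.mpr hi

/-- The fiber integral of an amplitude. -/
def fgI {n : ℕ} (K : Set (Cn n)) (ω : Pt n → ℂ) (x : Pt n) : ℂ :=
  ∫ z' in K, ω (x.1, z') * Complex.exp (cpair (z' - x.1) x.2)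

/-- The class of functions obtained from fiber integrals. -/
inductive FGood {n : ℕ} (K B : Set (Cn n)) (O : Set (Pt n)) : (Pt n → ℂ) → Prop
  | base (ω : Pt n → ℂ) (hω : ContDiffOn ℝ (⊤ : ℕ∞) ω O) : FGood K B O (fgI K ω)
  | add (f g : Pt n → ℂ) (hf : FGood K B O f) (hg : FGood K B O g) :
      FGood K B O (fun x => f x + g x)
  | smul (c : ℂ) (f : Pt n → ℂ) (hf : FGood K B O f) : FGood K B O (fun x => c * f x)
  | mul (v : Cn n) (f : Pt n → ℂ) (hf : FGood K B O f) :
      FGood K B O (fun x => cpair v x.2 * f x)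
  | congr (f g : Pt n → ℂ) (hf : FGood K B O f)
      (hfg : ∀ x : Pt n, x.1 ∈ B → g x = f x) : FGood K B O g

lemma fg_cpair_contDiff {n : ℕ} {E : Type*} [NormedAddCommGroup E] [NormedSpace ℝ E]
    (a b : E → Cn n) (ha : ContDiff ℝ (⊤ : ℕ∞) a) (hb : ContDiff ℝ (⊤ : ℕ∞) b) :
    ContDiff ℝ (⊤ : ℕ∞) (fun x => cpair (a x) (b x)) := by
  unfold cpair
  refine ContDiff.sum fun i _ => ?_
  exact ((contDiff_pi.mp ha) i).mul ((contDiff_pi.mp hb) i)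

/-- integrand -/
def fgH {n : ℕ} (ω : Pt n → ℂ) (y : Pt n × Cn n) : ℂ :=
  ω (y.1.1, y.2) * Complex.exp (cpair (y.2 - y.1.1) y.1.2)

lemma fg_exp_contDiff {n : ℕ} : ContDiff ℝ (⊤ : ℕ∞)
    (fun y : Pt n × Cn n => Complex.exp (cpair (y.2 - y.1.1) y.1.2)) := by
  refine ContDiff.cexp ?_
  apply fg_cpair_contDiff <;> fun_prop

lemma fg_H_contDiffOn {n : ℕ} (O : Set (Pt n)) (ω : Pt n → ℂ)
    (hω : ContDiffOn ℝ (⊤ : ℕ∞) ω O) :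
    ContDiffOn ℝ (⊤ : ℕ∞) (fgH ω) {y : Pt n × Cn n | (y.1.1, y.2) ∈ O} := by
  unfold fgH
  refine ContDiffOn.mul ?_ fg_exp_contDiff.contDiffOn
  refine hω.comp (g := ω) (f := fun y : Pt n × Cn n => (y.1.1, y.2)) ?_ (fun y hy => hy)
  exact ContDiff.contDiffOn (by fun_prop)

lemma fg_contDiffOn_dir {n : ℕ} (O : Set (Pt n)) (hO : IsOpen O) (ω : Pt n → ℂ)
    (hω : ContDiffOn ℝ (⊤ : ℕ∞) ω O) (w : Pt n) :
    ContDiffOn ℝ (⊤ : ℕ∞) (fun p => fderiv ℝ ω p w) O :=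
  (hω.fderiv_of_isOpen hO (m := (⊤ : ℕ∞)) (by exact le_rfl)).clm_apply contDiffOn_const

lemma fg_H_fderiv {n : ℕ} (O : Set (Pt n)) (hO : IsOpen O) (ω : Pt n → ℂ)
    (hω : ContDiffOn ℝ (⊤ : ℕ∞) ω O) (v : Cn n) (y : Pt n × Cn n) (hy : (y.1.1, y.2) ∈ O) :
    fderiv ℝ (fgH ω) y ((v, 0), 0) =
      fgH (fun p => fderiv ℝ ω p (v, 0)) y + cpair (-v) y.1.2 * fgH ω y := by
  have h1 : DifferentiableAt ℝ ω (y.1.1, y.2) :=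
    (hω.contDiffAt (hO.mem_nhds hy)).differentiableAt (by simp)
  set L : Pt n × Cn n →L[ℝ] Pt n :=
    ((ContinuousLinearMap.fst ℝ (Cn n) (Cn n)).comp
      (ContinuousLinearMap.fst ℝ (Pt n) (Cn n))).prod (ContinuousLinearMap.snd ℝ (Pt n) (Cn n))
    with hL
  have h2 : HasFDerivAt (fun y : Pt n × Cn n => ω (y.1.1, y.2))
      ((fderiv ℝ ω (y.1.1, y.2)).comp L) y :=
    HasFDerivAt.comp (g := ω) (f := fun y : Pt n × Cn n => (y.1.1, y.2)) y h1.hasFDerivAt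
      L.hasFDerivAt
  have hD : DifferentiableAt ℝ (fun y : Pt n × Cn n => cpair (y.2 - y.1.1) y.1.2) y := by
    refine ContDiff.differentiable (n := (⊤ : ℕ∞)) ?_ (by simp) y
    apply fg_cpair_contDiff <;> fun_prop
  have h3 : fderiv ℝ (fun y : Pt n × Cn n => cpair (y.2 - y.1.1) y.1.2) y ((v, 0), 0)
      = cpair (-v) y.1.2 := by
    rw [← hD.lineDeriv_eq_fderiv]
    refine HasLineDerivAt.lineDeriv ?_
    unfold HasLineDerivAt
    have : (fun t : ℝ => (fun y : Pt n × Cn n => cpair (y.2 - y.1.1) y.1.2) (y + t • ((v, 0), 0)))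
        = fun t : ℝ => cpair (y.2 - y.1.1) y.1.2 + (t : ℂ) * cpair (-v) y.1.2 := by
      funext t
      simp only [cpair, Finset.mul_sum, ← Finset.sum_add_distrib]
      refine Finset.sum_congr rfl fun i _ => ?_
      simp
      ring
    rw [this]
    have := ((Complex.ofRealCLM.hasDerivAt (x := (0:ℝ))).mul_const (cpair (-v) y.1.2)).const_add
      (cpair (y.2 - y.1.1) y.1.2)
    simpa using this
  have h4 := h2.mul hD.hasFDerivAt.cexp
  have h5 : fderiv ℝ (fgH ω) y = _ := h4.fderiv
  rw [h5]
  simp only [ContinuousLinearMap.add_apply, ContinuousLinearMap.smul_apply, h3, fgH]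
  simp [hL]
  ring

lemma fg_base {n : ℕ} (K : Set (Cn n)) (hK : IsCompact K)
    (B : Set (Cn n)) (hB : IsOpen B) (O : Set (Pt n)) (hO : IsOpen O)
    (hOs : (closure B) ×ˢ K ⊆ O) (ω : Pt n → ℂ)
    (hω : ContDiffOn ℝ (⊤ : ℕ∞) ω O) (x : Pt n) (hx : x.1 ∈ B) :
    DifferentiableAt ℝ (fgI K ω) x ∧ ∀ v : Cn n, fderiv ℝ (fgI K ω) x (v, 0) =
      fgI K (fun p => fderiv ℝ ω p (v, 0)) x + cpair (-v) x.2 * fgI K ω x := by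
  set O' := {y : Pt n × Cn n | (y.1.1, y.2) ∈ O} with hO'
  have hO'o : IsOpen O' := hO.preimage (by fun_prop)
  have hU : IsOpen (B ×ˢ (Set.univ : Set (Cn n))) := hB.prod isOpen_univ
  obtain ⟨r, hr, hrs⟩ := Metric.nhds_basis_closedBall.mem_iff.mp
    (hU.mem_nhds (show x ∈ B ×ˢ (Set.univ : Set (Cn n)) from ⟨hx, trivial⟩))
  have hmem : ∀ p ∈ Metric.closedBall x r, ∀ z' ∈ K, (p, z') ∈ O' := fun p hp z' hz' =>
    hOs ⟨subset_closure (hrs hp).1, hz'⟩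
  have hxm : x ∈ Metric.closedBall x r := Metric.mem_closedBall_self hr.le
  have cont : ∀ (η : Pt n → ℂ), ContDiffOn ℝ (⊤ : ℕ∞) η O → ∀ p ∈ Metric.closedBall x r,
      ContinuousOn (fun z' => fgH η (p, z')) K := fun η hη p hp =>
    (fg_H_contDiffOn O η hη).continuousOn.comp (by fun_prop) (fun z' hz' => hmem p hp z' hz')
  have hH := fg_H_contDiffOn O ω hω
  have hH' : ContinuousOn (fderiv ℝ (fgH ω)) O' :=
    hH.continuousOn_fderiv_of_isOpen hO'o (by simp)
  set ι := ContinuousLinearMap.inl ℝ (Pt n) (Cn n) with hι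
  set H' : Pt n → Cn n → (Pt n →L[ℝ] ℂ) := fun p z' => (fderiv ℝ (fgH ω) (p, z')).comp ι with hHd
  have hc : ContinuousOn (fun y : Pt n × Cn n => H' y.1 y.2) O' := by
    exact hH'.clm_comp continuousOn_const
  obtain ⟨C, hC⟩ := ((isCompact_closedBall x r).prod hK).exists_bound_of_continuousOn
    (hc.mono (fun y hy => hmem y.1 hy.1 y.2 hy.2))
  have hcx : ContinuousOn (fun z' => H' x z') K :=
    hc.comp (f := fun z' => (x, z')) (by fun_prop) (fun z' hz' => hmem x hxm z' hz')
  have key := hasFDerivAt_integral_of_dominated_of_fderiv_le (𝕜 := ℝ)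
    (μ := volume.restrict K) (F := fun p z' => fgH ω (p, z')) (F' := H') (x₀ := x)
    (s := Metric.closedBall x r) (bound := fun _ => C)
    (Metric.closedBall_mem_nhds x hr)
    (by
      filter_upwards [Metric.closedBall_mem_nhds x hr] with p hp
      exact (cont ω hω p hp).aestronglyMeasurable_of_isCompact hK hK.measurableSet)
    ((cont ω hω x hxm).integrableOn_compact hK)
    (hcx.aestronglyMeasurable_of_isCompact hK hK.measurableSet)
    (by
      filter_upwards [ae_restrict_mem hK.measurableSet] with z' hz' p hp
      exact hC (p, z') ⟨hp, hz'⟩)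
    (by
      have := hK.measure_lt_top (μ := volume)
      exact integrableOn_const this.ne)
    (by
      filter_upwards [ae_restrict_mem hK.measurableSet] with z' hz' p hp
      have h1 : DifferentiableAt ℝ (fgH ω) (p, z') :=
        (hH.contDiffAt (hO'o.mem_nhds (hmem p hp z' hz'))).differentiableAt (by simp)
      exact HasFDerivAt.comp (g := fgH ω) (f := fun p => (p, z')) p h1.hasFDerivAt
        (hasFDerivAt_prodMk_left p z'))
  have key' : HasFDerivAt (fgI K ω) (∫ z' in K, H' x z') x := key
  refine ⟨key'.differentiableAt, fun v => ?_⟩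
  rw [key'.fderiv, ContinuousLinearMap.integral_apply (hcx.integrableOn_compact hK)]
  have e : ∫ z' in K, H' x z' (v, 0) = ∫ z' in K, (fgH (fun p => fderiv ℝ ω p (v, 0)) (x, z')
      + cpair (-v) x.2 * fgH ω (x, z')) := by
    refine setIntegral_congr_fun hK.measurableSet fun z' hz' => ?_
    exact fg_H_fderiv O hO ω hω v (x, z') (hmem x hxm z' hz')
  rw [e, integral_add, integral_const_mul]
  · rfl
  · exact (cont _ (fg_contDiffOn_dir O hO ω hω (v, 0)) x hxm).integrableOn_compact hK
  · exact ((cont ω hω x hxm).integrableOn_compact hK).const_mul _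

lemma fg_cpair_hasFDeriv {n : ℕ} (v : Cn n) (x : Pt n) :
    DifferentiableAt ℝ (fun x : Pt n => cpair v x.2) x ∧
    ∀ u : Cn n, fderiv ℝ (fun x : Pt n => cpair v x.2) x (u, 0) = 0 := by
  have hD : DifferentiableAt ℝ (fun x : Pt n => cpair v x.2) x := by
    refine ContDiff.differentiable (n := (⊤ : ℕ∞)) ?_ (by simp) x
    apply fg_cpair_contDiff <;> fun_prop
  refine ⟨hD, fun u => ?_⟩
  rw [← hD.lineDeriv_eq_fderiv]
  simp [lineDeriv]

lemma fg_deriv {n : ℕ} (K : Set (Cn n)) (hK : IsCompact K)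
    (B : Set (Cn n)) (hB : IsOpen B) (O : Set (Pt n)) (hO : IsOpen O)
    (hOs : (closure B) ×ˢ K ⊆ O) (f : Pt n → ℂ) (hf : FGood K B O f) :
    (∀ x : Pt n, x.1 ∈ B → DifferentiableAt ℝ f x) ∧
      ∀ v : Cn n, FGood K B O (fun x => fderiv ℝ f x (v, 0)) := by
  induction hf with
  | base ω hω =>
    have hb := fg_base K hK B hB O hO hOs ω hω
    refine ⟨fun x hx => (hb x hx).1, fun v => ?_⟩
    refine .congr _ _ (.add _ _ (.base _ (fg_contDiffOn_dir O hO ω hω (v, 0)))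
      (.mul (-v) _ (.base ω hω))) fun x hx => (hb x hx).2 v
  | add f g _ _ h1 h2 =>
    refine ⟨fun x hx => (h1.1 x hx).add (h2.1 x hx), fun v => ?_⟩
    refine .congr _ _ (.add _ _ (h1.2 v) (h2.2 v)) fun x hx => ?_
    rw [fderiv_fun_add (h1.1 x hx) (h2.1 x hx)]; rfl
  | smul c f _ h1 =>
    refine ⟨fun x hx => (h1.1 x hx).const_mul c, fun v => ?_⟩
    refine .congr _ _ (.smul c _ (h1.2 v)) fun x hx => ?_
    rw [fderiv_const_mul (h1.1 x hx)]; rfl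
  | mul w f _ h1 =>
    refine ⟨fun x hx => (fg_cpair_hasFDeriv w x).1.mul (h1.1 x hx), fun v => ?_⟩
    refine .congr _ _ (.mul w _ (h1.2 v)) fun x hx => ?_
    rw [fderiv_fun_mul (fg_cpair_hasFDeriv w x).1 (h1.1 x hx)]
    simp [(fg_cpair_hasFDeriv w x).2 v]
  | congr f g _ hfg h1 =>
    have he : ∀ x : Pt n, x.1 ∈ B → g =ᶠ[nhds x] f := fun x hx => by
      filter_upwards [(hB.preimage continuous_fst).mem_nhds hx] with y hy using hfg y hy
    refine ⟨fun x hx => (h1.1 x hx).congr_of_eventuallyEq (he x hx), fun v => ?_⟩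
    refine .congr _ _ (h1.2 v) fun x hx => ?_
    rw [(he x hx).fderiv_eq]

lemma fg_bound {n : ℕ} (K : Set (Cn n)) (hK : IsCompact K)
    (B : Set (Cn n)) (hBbdd : Bornology.IsBounded B) (O : Set (Pt n))
    (hOs : (closure B) ×ˢ K ⊆ O) (Γ : Set (Cn n)) (M : ℝ)
    (hM : ∀ z ∈ B, ∀ z' ∈ K, ∀ ζ ∈ Γ, (cpair (z' - z) ζ).re ≤ M * eucNorm ζ)
    (f : Pt n → ℂ) (hf : FGood K B O f) :
    ∀ h : ℝ, 0 < h → ∃ C : ℝ, 0 ≤ C ∧ ∀ z ∈ B, ∀ ζ ∈ Γ,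
      ‖f (z, ζ)‖ ≤ C * Real.exp ((M + h) * eucNorm ζ) := by
  have hpos : ∀ ζ : Cn n, 0 ≤ eucNorm ζ := fun ζ => Real.sqrt_nonneg _
  induction hf with
  | base ω hω =>
    intro h hh
    obtain ⟨C, hC⟩ := (hBbdd.isCompact_closure.prod hK).exists_bound_of_continuousOn
      (hω.continuousOn.mono hOs)
    refine ⟨|C| * volume.real K, by positivity, fun z hz ζ hζ => ?_⟩
    have := norm_setIntegral_le_of_norm_le_const (μ := volume) (s := K)
      (f := fun z' => ω (z, z') * Complex.exp (cpair (z' - z) ζ))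
      (C := |C| * Real.exp ((M + h) * eucNorm ζ)) hK.measure_lt_top (fun z' hz' => by
        rw [norm_mul, Complex.norm_exp]
        refine mul_le_mul ((hC (z, z') ⟨subset_closure hz, hz'⟩).trans (le_abs_self C))
          (Real.exp_le_exp.mpr ?_) (Real.exp_nonneg _) (abs_nonneg _)
        have := hM z hz z' hz' ζ hζ
        nlinarith [hpos ζ])
    refine this.trans (le_of_eq (by ring))
  | add f g _ _ h1 h2 =>
    intro h hh
    obtain ⟨C, hC0, hC⟩ := h1 h hh
    obtain ⟨D, hD0, hD⟩ := h2 h hh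
    refine ⟨C + D, by positivity, fun z hz ζ hζ => ?_⟩
    refine (norm_add_le _ _).trans ?_
    rw [add_mul]
    exact add_le_add (hC z hz ζ hζ) (hD z hz ζ hζ)
  | smul c f _ h1 =>
    intro h hh
    obtain ⟨C, hC0, hC⟩ := h1 h hh
    refine ⟨‖c‖ * C, by positivity, fun z hz ζ hζ => ?_⟩
    rw [norm_mul, mul_assoc]
    exact mul_le_mul_of_nonneg_left (hC z hz ζ hζ) (norm_nonneg _)
  | mul v f _ h1 =>
    intro h hh
    obtain ⟨C, hC0, hC⟩ := h1 (h / 2) (by positivity)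
    set A := ∑ i, ‖v i‖ with hA
    have hA0 : 0 ≤ A := Finset.sum_nonneg fun i _ => norm_nonneg _
    refine ⟨A * (2 / h) * C, by positivity, fun z hz ζ hζ => ?_⟩
    rw [norm_mul]
    have e1 : eucNorm ζ ≤ (2 / h) * Real.exp (h / 2 * eucNorm ζ) := by
      have := Real.add_one_le_exp (h / 2 * eucNorm ζ)
      calc eucNorm ζ = (2 / h) * (h / 2 * eucNorm ζ) := by field_simp
        _ ≤ _ := mul_le_mul_of_nonneg_left (by linarith) (by positivity)
    have e2 : ‖cpair v ζ‖ ≤ A * ((2 / h) * Real.exp (h / 2 * eucNorm ζ)) :=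
      (fg_cpair_bound v ζ).trans (mul_le_mul_of_nonneg_left e1 hA0)
    refine (mul_le_mul e2 (hC z hz ζ hζ) (norm_nonneg _) (by positivity)).trans (le_of_eq ?_)
    have : Real.exp ((M + h) * eucNorm ζ)
        = Real.exp (h / 2 * eucNorm ζ) * Real.exp ((M + h / 2) * eucNorm ζ) := by
      rw [← Real.exp_add]; congr 1; ring
    rw [this]; ring
  | congr f g _ hfg h1 =>
    intro h hh
    obtain ⟨C, hC0, hC⟩ := h1 h hh
    refine ⟨C, hC0, fun z hz ζ hζ => ?_⟩
    rw [hfg (z, ζ) hz]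
    exact hC z hz ζ hζ

lemma fg_mixed {n : ℕ} (P : (Pt n → ℂ) → Prop) (h1 : ∀ i f, P f → P (dz i f))
    (h2 : ∀ i f, P f → P (dzbar i f)) (α β : Fin n → ℕ) (f : Pt n → ℂ) (hf : P f) :
    P (mixedDeriv α β f) := by
  have hit : ∀ (d : (Pt n → ℂ) → (Pt n → ℂ)), (∀ f, P f → P (d f)) → ∀ k f, P f → P (d^[k] f) := by
    intro d hd k
    induction k with
    | zero => intro f hf; exact hf
    | succ k ih => intro f hf; exact ih _ (hd f hf)
  have hl : ∀ l : List ((Pt n → ℂ) → (Pt n → ℂ)), (∀ d ∈ l, ∀ f, P f → P (d f)) →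
      P (l.foldr (fun d g => d g) f) := by
    intro l
    induction l with
    | nil => intro _; exact hf
    | cons d l ih =>
      intro h
      exact h d (by simp) _ (ih fun d' hd' => h d' (by simp [hd']))
  refine hl _ fun d hd => ?_
  rw [List.mem_append, List.mem_ofFn, List.mem_ofFn] at hd
  rcases hd with ⟨i, rfl⟩ | ⟨i, rfl⟩
  · exact hit _ (h1 i) _
  · exact hit _ (h2 i) _

/-- (Infra-exponential growth of the fiber integrals of the symbol
map.) With `M = sup { Re⟨z' − z, ζ⟩/|ζ| : z ∈ B, z' ∈ K, ζ ∈ Γ }`, all mixed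
`(z, z̄)`-derivatives of `F(z, ζ) = ∫_K ω(z, z') e^{⟨z'−z, ζ⟩} dλ(z')` are bounded by
`C·e^{(M+h)|ζ|}` on `B × Γ`, for every `h > 0`. -/
theorem fiber_integral_growth {n : ℕ}
    (K : Set (Cn n)) (hK : IsCompact K)
    (B : Set (Cn n)) (hBopen : IsOpen B) (hBbdd : Bornology.IsBounded B)
    (Γ : Set (Cn n)) (hΓ0 : (0 : Cn n) ∉ Γ)
    (hΓcone : ∀ ζ ∈ Γ, ∀ t : ℝ, 0 < t → t • ζ ∈ Γ)
    (M : ℝ)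
    (hM : M = sSup {x : ℝ | ∃ z ∈ B, ∃ z' ∈ K, ∃ ζ ∈ Γ,
      x = (cpair (z' - z) ζ).re / eucNorm ζ})
    (ω : Pt n → ℂ) (O : Set (Pt n)) (hOopen : IsOpen O)
    (hOsub : (closure B) ×ˢ K ⊆ O) (hω : ContDiffOn ℝ (⊤ : ℕ∞) ω O)
    (F : Pt n → ℂ)
    (hF : ∀ x : Pt n,
      F x = ∫ z' in K, ω (x.1, z') * Complex.exp (cpair (z' - x.1) x.2)) :
    ∀ α β : Fin n → ℕ, ∀ h : ℝ, 0 < h → ∃ C : ℝ, 0 < C ∧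
      ∀ z ∈ B, ∀ ζ ∈ Γ,
        ‖mixedDeriv α β F (z, ζ)‖ ≤ C * Real.exp ((M + h) * eucNorm ζ) := by
  intro α β h hh
  have hbase : FGood K B O F :=
    .congr _ _ (.base ω hω) fun x _ => hF x
  have hgood : FGood K B O (mixedDeriv α β F) := by
    refine fg_mixed (FGood K B O) (fun i f hf => ?_) (fun i f hf => ?_) α β F hbase
    · have hd := (fg_deriv K hK B hBopen O hOopen hOsub f hf).2
      refine .congr _ _ (.smul (1 / 2) _ (.add _ _ (hd (Pi.single i 1))
        (.smul (-Complex.I) _ (hd (Pi.single i Complex.I))))) fun x _ => ?_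
      simp only [dz]
      ring
    · have hd := (fg_deriv K hK B hBopen O hOopen hOsub f hf).2
      refine .congr _ _ (.smul (1 / 2) _ (.add _ _ (hd (Pi.single i 1))
        (.smul Complex.I _ (hd (Pi.single i Complex.I))))) fun x _ => ?_
      simp only [dzbar]
  have hbd : BddAbove {x : ℝ | ∃ z ∈ B, ∃ z' ∈ K, ∃ ζ ∈ Γ,
      x = (cpair (z' - z) ζ).re / eucNorm ζ} := by
    obtain ⟨R, hR⟩ := hBbdd.exists_norm_le
    obtain ⟨S, hS⟩ := hK.isBounded.exists_norm_le
    refine ⟨∑ _i : Fin n, (S + R), ?_⟩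
    rintro x ⟨z, hz, z', hz', ζ, hζ, rfl⟩
    have hp := fg_eucNorm_pos ζ (fun h0 => hΓ0 (h0 ▸ hζ))
    rw [div_le_iff₀ hp]
    refine ((Complex.re_le_norm _).trans (fg_cpair_bound _ _)).trans ?_
    refine mul_le_mul_of_nonneg_right (Finset.sum_le_sum fun i _ => ?_) hp.le
    refine (norm_le_pi_norm (z' - z) i).trans ((norm_sub_le _ _).trans ?_)
    exact add_le_add (hS z' hz') (hR z hz)
  have hM' : ∀ z ∈ B, ∀ z' ∈ K, ∀ ζ ∈ Γ, (cpair (z' - z) ζ).re ≤ M * eucNorm ζ := by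
    intro z hz z' hz' ζ hζ
    have hp := fg_eucNorm_pos ζ (fun h0 => hΓ0 (h0 ▸ hζ))
    rw [← div_le_iff₀ hp, hM]
    exact le_csSup hbd ⟨z, hz, z', hz', ζ, hζ, rfl⟩
  obtain ⟨C, hC0, hC⟩ := fg_bound K hK B hBbdd O hOsub Γ M hM' _ hgood h hh
  refine ⟨C + 1, by linarith, fun z hz ζ hζ => (hC z hz ζ hζ).trans ?_⟩
  exact mul_le_mul_of_nonneg_right (by linarith) (Real.exp_nonneg _)
end
end
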